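/- arXiv:1801.08565 — 5 statements merged into one kernel-verified Lean document; each statement's English description precedes it below -/
import Mathlib

section
/- Every sequence of n ≥ 8 distinct real numbers contains a (not necessarily contiguous) subsequence of length at least ⌈n/2⌉ that is a rollercoaster. -/
/-- `IsRun t i j` says that the contiguous block `t i, t (i+1), …, t j` is a
*run* of the finite sequence `t`: it is strictly increasing or strictly
decreasing, and it is maximal with this property among contiguous blocks. -/
def IsRun {m : ℕ} (t : Fin m → ℝ) (i j : Fin m) : Prop :=
  i ≤ j ∧
  (StrictMonoOn t (Set.Icc i j) ∨ StrictAntiOn t (Set.Icc i j)) ∧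
  ∀ i' j' : Fin m, i' ≤ i → j ≤ j' → (i ≠ i' ∨ j ≠ j') →
    ¬ (StrictMonoOn t (Set.Icc i' j') ∨ StrictAntiOn t (Set.Icc i' j'))

/-- A *rollercoaster* is a finite sequence of distinct real numbers with at
least three terms in which every run has length (`j - i + 1`) at least 3. -/
def IsRollercoaster {m : ℕ} (t : Fin m → ℝ) : Prop :=
  3 ≤ m ∧ Function.Injective t ∧
  ∀ i j : Fin m, IsRun t i j → (i : ℕ) + 2 ≤ (j : ℕ)

/-! Scan the terms from left to right. A term that ends a rollercoaster can be continued by every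
later term: in the direction of the last run always, against it once that run has three terms. So
if the best rollercoasters with an increasing and with a decreasing last run have total length
about `t` after `t` terms, then wherever the next term falls, one of them grows, or that term starts
a turn which pays off one term later. The total thus keeps up with `t`, and the longer of the two
has at least half of the terms. The beginning is the only obstacle, since a first run of two terms
is worthless; all relative orders of the first eight terms are searched for it. -/

open Function Set

namespace Rollercoaster

section Criterion

lemma isRollercoaster_of_forall_exists_triple {m : ℕ} {T : ℕ → ℝ} (hm : 2 ≤ m)
    (hT : InjOn T (Iio m))
    (htriple : ∀ q, q + 1 < m → ∃ p, p ≤ q ∧ q ≤ p + 1 ∧ p + 2 < m ∧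
      (StrictMonoOn T (Icc p (p + 2)) ∨ StrictAntiOn T (Icc p (p + 2)))) :
    IsRollercoaster fun k : Fin m => T k := by
  refine ⟨?_, fun k l h => Fin.ext (hT k.2 l.2 h), ?_⟩
  · obtain ⟨p, -, -, hp, -⟩ := htriple 0 hm
    omega
  · rintro i j ⟨hij, -, hmax⟩
    rw [Fin.le_def] at hij
    by_contra! hshort
    obtain ⟨q, hqm, hqi, hjq⟩ : ∃ q, q + 1 < m ∧ q ≤ i ∧ (j : ℕ) ≤ q + 1 :=
      ⟨min i (m - 2), by omega, by omega, by omega⟩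
    obtain ⟨p, hpq, hqp, hpm, hp⟩ := htriple q hqm
    refine hmax ⟨p, by omega⟩ ⟨p + 2, hpm⟩ (Fin.le_def.2 (hpq.trans hqi))
      (Fin.le_def.2 (hjq.trans (by simpa using hqp))) ?_ ?_
    · simp only [ne_eq, Fin.ext_iff]
      omega
    · exact hp.imp (fun h x hx y hy hxy => h hx hy hxy) fun h x hx y hy hxy => h hx hy hxy

/-- The indices `i`, `j`, `k` occur in this order or in the opposite one with respect to `r`. -/
def MonotoneTriple (r : ℕ → ℕ → Prop) (i j k : ℕ) : Prop :=
  r i j ∧ r j k ∨ r k j ∧ r j i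

/-- The step between `a q` and `a (q + 1)` belongs to a run with at least three terms of the
sequence `a 0, …, a (m - 1)`, compared by `r`. -/
def InLongRun (r : ℕ → ℕ → Prop) (a : ℕ → ℕ) (m q : ℕ) : Prop :=
  ∃ p, p ≤ q ∧ q ≤ p + 1 ∧ p + 2 < m ∧ MonotoneTriple r (a p) (a (p + 1)) (a (p + 2))

variable {r : ℕ → ℕ → Prop} {a : ℕ → ℕ} {i j k m q : ℕ}

lemma monotoneTriple_swap : MonotoneTriple (swap r) i j k ↔ MonotoneTriple r i j k := by
  simp only [MonotoneTriple, swap]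
  tauto

lemma inLongRun_swap : InLongRun (swap r) a m q ↔ InLongRun r a m q := by
  simp only [InLongRun, monotoneTriple_swap]

lemma InLongRun.cons (h : InLongRun r a m q) (i : ℕ) :
    InLongRun r (fun k => Nat.casesOn k i a) (m + 1) (q + 1) := by
  obtain ⟨p, hpq, hqp, hpm, hp⟩ := h
  exact ⟨p + 1, by omega, by omega, by omega, hp⟩

lemma MonotoneTriple.strictMonoOn_or_strictAntiOn {S T : ℕ → ℝ} {p : ℕ}
    (h : MonotoneTriple (fun i j => S i < S j) i j k)
    (h0 : T p = S k) (h1 : T (p + 1) = S j) (h2 : T (p + 2) = S i) :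
    StrictMonoOn T (Icc p (p + 2)) ∨ StrictAntiOn T (Icc p (p + 2)) := by
  have key : ∀ x ∈ Icc p (p + 2), x + 1 ∈ Icc p (p + 2) → x = p ∨ x = p + 1 := by
    intro x hx hx'
    simp only [mem_Icc] at hx hx'
    omega
  rcases h with ⟨hij, hjk⟩ | ⟨hkj, hji⟩
  · refine .inr (strictAntiOn_of_add_one_lt ordConnected_Icc fun x _ hx hx' => ?_)
    rcases key x hx hx' with rfl | rfl
    · rwa [h0, h1]
    · exact h2.trans_lt (hij.trans_eq h1.symm)
  · refine .inl (strictMonoOn_of_lt_add_one ordConnected_Icc fun x _ hx hx' => ?_)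
    rcases key x hx hx' with rfl | rfl
    · rwa [h0, h1]
    · exact h1.trans_lt (hji.trans_eq h2.symm)

lemma exists_isRollercoaster_of_inLongRun {n : ℕ} {s : Fin n → ℝ} (hs : Injective s)
    {S : ℕ → ℝ} (hS : ∀ i : Fin n, S i = s i) (hm : 2 ≤ m) (ha0 : a 0 < n)
    (ha : ∀ q, q + 1 < m → a (q + 1) < a q)
    (hrun : ∀ q, q + 1 < m → InLongRun (fun i j => S i < S j) a m q) :
    ∃ f : Fin m → Fin n, StrictMono f ∧ IsRollercoaster (s ∘ f) := by
  have hanti : StrictAntiOn a (Iio m) :=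
    strictAntiOn_of_add_one_lt ordConnected_Iio fun q _ _ hq => ha q hq
  have hbound : ∀ q < m, a q < n := fun q hq =>
    (hanti.antitoneOn (mem_Iio.2 (by omega)) hq (Nat.zero_le q)).trans_lt ha0
  let f : Fin m → Fin n := fun k => ⟨a (m - 1 - k), hbound _ (by omega)⟩
  have hf : StrictMono f := fun k l hkl =>
    hanti (mem_Iio.2 (by omega)) (mem_Iio.2 (by omega)) (by omega)
  have hcomp : s ∘ f = fun k : Fin m => S (a (m - 1 - k)) := funext fun k => (hS (f k)).symm
  refine ⟨f, hf, ?_⟩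
  have hinj : Injective (s ∘ f) := hs.comp hf.injective
  rw [hcomp] at hinj ⊢
  refine isRollercoaster_of_forall_exists_triple (T := fun k => S (a (m - 1 - k))) hm
    (fun k hk l hl h => congrArg Fin.val (@hinj ⟨k, hk⟩ ⟨l, hl⟩ h)) fun q hq => ?_
  obtain ⟨p, hpq, hqp, hpm, hp⟩ := hrun (m - 2 - q) (by omega)
  refine ⟨m - 3 - p, by omega, by omega, by omega, hp.strictMonoOn_or_strictAntiOn ?_ ?_ ?_⟩ <;>
    congr 2 <;> omega

end Criterion

section Climb

/-- The indices `a (m - 1) < ⋯ < a 0 = i`, listed backwards so that a sequence is extended at `0`,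
form a sequence whose last step is an ascent for `r` and whose runs all have at least three terms,
except possibly the last one if `full` is `false`. -/
def Climb (r : ℕ → ℕ → Prop) (full : Bool) (i m : ℕ) : Prop :=
  ∃ a : ℕ → ℕ, a 0 = i ∧ 2 ≤ m ∧ (∀ q, q + 1 < m → a (q + 1) < a q) ∧ r (a 1) (a 0) ∧
    ∀ q, q + 1 < m → (q = 0 → full = true) → InLongRun r a m q

variable {r : ℕ → ℕ → Prop} {full : Bool} {i j l m : ℕ}

lemma Climb.pair (hji : j < i) (hr : r j i) : Climb r false i 2 := by
  refine ⟨fun k => Nat.casesOn k i fun _ => j, rfl, le_rfl, ?_, hr, ?_⟩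
  · intro q hq
    obtain rfl : q = 0 := by omega
    exact hji
  · intro q hq hfull
    exact absurd (hfull (by omega)) (by decide)

lemma Climb.weaken (h : Climb r true i m) : Climb r false i m := by
  obtain ⟨a, ha0, hm, ha, hr, hrun⟩ := h
  exact ⟨a, ha0, hm, ha, hr, fun q hq _ => hrun q hq fun _ => rfl⟩

lemma Climb.ascend (h : Climb r full j m) (hji : j < i) (hr : r j i) :
    Climb r true i (m + 1) := by
  obtain ⟨a, rfl, hm, ha, hr', hrun⟩ := h
  refine ⟨fun k => Nat.casesOn k i a, rfl, by omega, ?_, hr, ?_⟩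
  · rintro (_ | q) hq
    · exact hji
    · exact ha q (by omega)
  · have htop : MonotoneTriple r i (a 0) (a 1) := .inr ⟨hr', hr⟩
    rintro (_ | _ | q) hq -
    · exact ⟨0, by omega, by omega, by omega, htop⟩
    · exact ⟨0, by omega, by omega, by omega, htop⟩
    · exact (hrun (q + 1) (by omega) (by omega)).cons i

lemma Climb.turn (h : Climb (swap r) true j m) (hji : j < i) (hr : r j i) :
    Climb r false i (m + 1) := by
  obtain ⟨a, rfl, hm, ha, -, hrun⟩ := h
  refine ⟨fun k => Nat.casesOn k i a, rfl, by omega, ?_, hr, ?_⟩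
  · rintro (_ | q) hq
    · exact hji
    · exact ha q (by omega)
  · rintro (_ | q) hq hfull
    · exact absurd (hfull rfl) (by decide)
    · exact (inLongRun_swap.1 (hrun q (by omega) fun _ => rfl)).cons i

/-- The term `i` ends a subsequence of adjusted length at least `l` whose last run increases for
`r` and, if `full` is `true`, has at least three terms. The adjusted length is the number of terms,
except that a single term (adjusted length `0`) and an ascending pair (adjusted length `1`) are
also admitted for `full = true`. -/
inductive EndsUp : (ℕ → ℕ → Prop) → Bool → ℕ → ℕ → Prop
  | zero {r : ℕ → ℕ → Prop} {i : ℕ} : EndsUp r true i 0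
  | pair {r : ℕ → ℕ → Prop} {i j : ℕ} (hji : j < i) (hr : r j i) : EndsUp r false i 2
  | weaken {r : ℕ → ℕ → Prop} {i l : ℕ} (h : EndsUp r true i l) : EndsUp r false i l
  | ascend {r : ℕ → ℕ → Prop} {full : Bool} {i j l : ℕ} (h : EndsUp r full j l) (hji : j < i)
      (hr : r j i) : EndsUp r true i (l + 1)
  | turn {r : ℕ → ℕ → Prop} {i j l : ℕ} (h : EndsUp (swap r) true j l) (hji : j < i)
      (hr : r j i) : EndsUp r false i (l + 1)

lemma EndsUp.exists_climb_or (h : EndsUp r full i l) :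
    (∃ m, l ≤ m ∧ Climb r full i m) ∨ l = 0 ∨ l = 1 ∧ ∃ j < i, r j i := by
  induction h with
  | zero => exact .inr (.inl rfl)
  | pair hji hr => exact .inl ⟨2, le_rfl, .pair hji hr⟩
  | weaken _ ih => exact ih.imp_left fun ⟨m, hm, hc⟩ => ⟨m, hm, hc.weaken⟩
  | @ascend r full i j l _ hji hr ih =>
    rcases ih with ⟨m, hm, hc⟩ | rfl | ⟨rfl, k, hkj, hr'⟩
    · exact .inl ⟨m + 1, by omega, hc.ascend hji hr⟩
    · exact .inr (.inr ⟨rfl, j, hji, hr⟩)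
    · exact .inl ⟨3, by omega, (Climb.pair hkj hr').ascend hji hr⟩
  | turn _ hji hr ih =>
    rcases ih with ⟨m, hm, hc⟩ | rfl | ⟨rfl, -⟩
    · exact .inl ⟨m + 1, by omega, hc.turn hji hr⟩
    · exact .inl ⟨2, by omega, .pair hji hr⟩
    · exact .inl ⟨2, by omega, .pair hji hr⟩

lemma EndsUp.exists_inLongRun (h : EndsUp r true i l) (hl : 2 ≤ l) :
    ∃ (m : ℕ) (a : ℕ → ℕ), l ≤ m ∧ a 0 = i ∧ (∀ q, q + 1 < m → a (q + 1) < a q) ∧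
      ∀ q, q + 1 < m → InLongRun r a m q := by
  obtain ⟨m, hlm, a, ha0, -, ha, -, hrun⟩ : ∃ m, l ≤ m ∧ Climb r true i m :=
    h.exists_climb_or.resolve_right (by omega)
  exact ⟨m, a, hlm, ha0, ha, fun q hq => hrun q hq fun _ => rfl⟩

lemma EndsUp.max {k : ℕ} (hk : EndsUp r full i k) (hl : EndsUp r full i l) :
    EndsUp r full i (max k l) := by
  rcases max_choice k l with h | h <;> rwa [h]

end Climb

section Scan

/-- The term `i`, one of the first `t`, ends a subsequence of adjusted length at least `l` whose
last run increases and has at least three terms. -/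
abbrev Up (r : ℕ → ℕ → Prop) (t i l : ℕ) : Prop := i < t ∧ EndsUp r true i l

/-- As `Up`, but the last run may still be short. -/
abbrev WeakUp (r : ℕ → ℕ → Prop) (t i l : ℕ) : Prop := i < t ∧ EndsUp r false i l

/-- The mirror image of `Up`, with a decreasing last run. -/
abbrev Down (r : ℕ → ℕ → Prop) (t i l : ℕ) : Prop := Up (swap r) t i l

/-- The mirror image of `WeakUp`, with a decreasing last run. -/
abbrev WeakDown (r : ℕ → ℕ → Prop) (t i l : ℕ) : Prop := WeakUp (swap r) t i l

variable {r : ℕ → ℕ → Prop} {t i k l u d : ℕ}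

lemma Up.succ (h : Up r t i l) : Up r (t + 1) i l := ⟨Nat.lt_succ_of_lt h.1, h.2⟩

lemma WeakUp.succ (h : WeakUp r t i l) : WeakUp r (t + 1) i l := ⟨Nat.lt_succ_of_lt h.1, h.2⟩

lemma Up.weak (h : Up r t i l) : WeakUp r t i l := ⟨h.1, h.2.weaken⟩

lemma Up.max (hk : Up r t i k) (hl : Up r t i l) : Up r t i (max k l) := ⟨hk.1, hk.2.max hl.2⟩

lemma WeakUp.up (h : WeakUp r t i l) (hr : r i t) : Up r (t + 1) t (l + 1) :=
  ⟨t.lt_succ_self, h.2.ascend h.1 hr⟩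

lemma Up.up (h : Up r t i l) (hr : r i t) : Up r (t + 1) t (l + 1) := h.weak.up hr

lemma Down.weakUp (h : Down r t i l) (hr : r i t) : WeakUp r (t + 1) t (l + 1) :=
  ⟨t.lt_succ_self, h.2.turn h.1 hr⟩

lemma WeakDown.down (h : WeakDown r t i l) (hr : r t i) : Down r (t + 1) t (l + 1) :=
  WeakUp.up h hr

lemma Down.down (h : Down r t i l) (hr : r t i) : Down r (t + 1) t (l + 1) := Up.up h hr

lemma Up.weakDown (h : Up r t i l) (hr : r t i) : WeakDown r (t + 1) t (l + 1) :=
  Down.weakUp (r := swap r) h hr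

/-- After `t` terms, an increasing length `u` and a decreasing length `d` are together large
enough: one more than `t`, or `t` if `d` is well ahead (as in a decreasing sequence, for which
`u = 0`). -/
abbrev Ample (t u d : ℕ) : Prop := t + 1 ≤ u + d ∨ t ≤ u + d ∧ u + 2 ≤ d

/-- The invariant of the scan after `t` terms, up to exchanging `r` and `swap r`. Each constructor
other than `ample` describes a term whose runs may be extended to an ample pair by the next term,
or which leads to another constructor. -/
inductive State (r : ℕ → ℕ → Prop) (t : ℕ) : Prop
  | ample {w v u d : ℕ} (hw : Up r t w u) (hv : Down r t v d) (h : Ample t u d)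
  | between {w v x u d : ℕ} (hw : Up r t w u) (hv : Down r t v d) (hxu : WeakUp r t x (d + 1))
      (hxd : WeakDown r t x (u + 1)) (ht : t ≤ u + d)
  | descent {v y a d : ℕ} (hv : Down r t v d) (hy : Down r t y a) (hyu : WeakUp r t y (d + 1))
      (ht : t ≤ a + d)
  | low {v y a b d : ℕ} (hv : Down r t v d) (hyu : WeakUp r t y b) (hyd : WeakDown r t y a)
      (h : Ample (t + 1) (b + 1) d) (hat : t ≤ a + d) (hdt : t ≤ 2 * d)
  | high {v w b u d : ℕ} (hv : Down r t v d) (hw : Up r t w u) (hwu : WeakUp r t w b)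
      (hub : u + 1 ≤ b) (hud : u + 1 ≤ d) (ht : t ≤ u + d)

namespace State

lemma succ_of_ample {w v : ℕ} (hr : ∀ i < t, r i t ∨ r t i) (hw : Up r t w u)
    (hv : Down r t v d) (h : Ample t u d) :
    State r (t + 1) := by
  rcases h with h | ⟨h, hud⟩
  · rcases hr w hw.1 with hwt | htw
    · exact .ample (hw.up hwt) hv.succ (by omega)
    rcases hr v hv.1 with hvt | htv
    · exact .between hw.succ hv.succ (hv.weakUp hvt) (hw.weakDown htw) h
    · exact .ample hw.succ (hv.down htv) (by omega)
  · rcases hr v hv.1 with hvt | htv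
    · rcases hr w hw.1 with hwt | htw
      · exact .high hv.succ (hw.up hwt) (hv.weakUp hvt) (by omega) (by omega) (by omega)
      · exact .low hv.succ (hv.weakUp hvt) (hw.weakDown htw) (by omega) (by omega) (by omega)
    · exact .ample hw.succ (hv.down htv) (by omega)

lemma succ_of_between {v x : ℕ} (hr : ∀ i < t, r i t ∨ r t i) (hv : Down r t v d)
    (hxu : WeakUp r t x (d + 1)) (hxd : WeakDown r t x (u + 1)) (ht : t ≤ u + d) (htx : r t x) :
    State r (t + 1) := by
  rcases hr v hv.1 with hvt | htv
  · exact .descent hv.succ (hxd.down htx) (hv.weakUp hvt) (by omega)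
  · exact .low ((hxd.down htx).max (hv.down htv)) hxu.succ hxd.succ (by omega) (by omega)
      (by omega)

lemma succ_of_descent {v y a : ℕ} (hr : ∀ i < t, r i t ∨ r t i) (hv : Down r t v d)
    (hy : Down r t y a) (hyu : WeakUp r t y (d + 1)) (ht : t ≤ a + d) : State r (t + 1) := by
  rcases hr y hy.1 with hyt | hty
  · exact .ample (hyu.up hyt) hy.succ (by omega)
  rcases hr v hv.1 with hvt | htv
  · exact .descent hv.succ (hy.down hty) (hv.weakUp hvt) (by omega)
  · exact .low ((hy.down hty).max (hv.down htv)) hyu.succ hy.succ.weak (by omega) (by omega)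
      (by omega)

lemma succ_of_low {v y a b : ℕ} (hr : ∀ i < t, r i t ∨ r t i) (hv : Down r t v d)
    (hyu : WeakUp r t y b) (hyd : WeakDown r t y a) (h : Ample (t + 1) (b + 1) d)
    (hat : t ≤ a + d) (hdt : t ≤ 2 * d) : State r (t + 1) := by
  rcases hr y hyu.1 with hyt | hty
  · exact .ample (hyu.up hyt) hv.succ h
  rcases hr v hv.1 with hvt | htv
  · exact .descent hv.succ (hyd.down hty) (hv.weakUp hvt) (by omega)
  · exact .low (hv.down htv) hyu.succ hyd.succ (by omega) (by omega) (by omega)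

lemma succ_of_high {v w b : ℕ} (hr : ∀ i < t, r i t ∨ r t i) (hv : Down r t v d)
    (hw : Up r t w u) (hwu : WeakUp r t w b) (hub : u + 1 ≤ b) (hud : u + 1 ≤ d)
    (ht : t ≤ u + d) : State r (t + 1) := by
  rcases hr w hw.1 with hwt | htw
  · exact .ample (hwu.up hwt) hv.succ (by omega)
  rcases hr v hv.1 with hvt | htv
  · exact .low hv.succ (hv.weakUp hvt) (hw.weakDown htw) (by omega) (by omega) (by omega)
  · exact .high (hv.down htv) hw.succ hwu.succ hub (by omega) (by omega)

lemma succ (hr : ∀ i < t, r i t ∨ r t i) (h : State r t) :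
    State r (t + 1) ∨ State (swap r) (t + 1) := by
  cases h with
  | ample hw hv h => exact .inl (succ_of_ample hr hw hv h)
  | between hw hv hxu hxd ht =>
    rcases hr _ hxu.1 with hxt | htx
    · exact .inr (succ_of_between (r := swap r) (fun i hi => (hr i hi).symm) hw hxd hxu (by omega)
        hxt)
    · exact .inl (succ_of_between hr hv hxu hxd ht htx)
  | descent hv hy hyu ht => exact .inl (succ_of_descent hr hv hy hyu ht)
  | low hv hyu hyd h hat hdt => exact .inl (succ_of_low hr hv hyu hyd h hat hdt)
  | high hv hw hwu hub hud ht => exact .inl (succ_of_high hr hv hw hwu hub hud ht)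

lemma exists_two_mul_ge (h : State r t) : ∃ i l, t ≤ 2 * l ∧ (Up r t i l ∨ Down r t i l) := by
  cases h with
  | @ample w v u d hw hv h =>
    rcases le_total u d with hud | hdu
    · exact ⟨v, d, by omega, .inr hv⟩
    · exact ⟨w, u, by omega, .inl hw⟩
  | @between w v x u d hw hv hxu hxd ht =>
    rcases le_total u d with hud | hdu
    · exact ⟨v, d, by omega, .inr hv⟩
    · exact ⟨w, u, by omega, .inl hw⟩
  | @descent v y a d hv hy hyu ht =>
    rcases le_total a d with had | hda
    · exact ⟨v, d, by omega, .inr hv⟩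
    · exact ⟨y, a, by omega, .inr hy⟩
  | low hv hyu hyd h hat hdt => exact ⟨_, _, hdt, .inr hv⟩
  | high hv hw hwu hub hud ht => exact ⟨_, _, by omega, .inr hv⟩

end State

end Scan

section Search

/-- Lengths attained by the subsequences that end with a given term, as for `Up`, `Down`, `WeakUp`
and `WeakDown`. -/
structure Profile where
  up : ℕ
  down : ℕ
  weakUp : ℕ
  weakDown : ℕ

/-- The computation of `f n`, in which the kernel has to evaluate `n` before it unfolds `f`. The
search below becomes much slower if the lengths are passed on as unevaluated expressions. -/
def force (n : ℕ) (f : ℕ → Bool) : Bool :=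
  match n with
  | 0 => f 0
  | k + 1 => f (k + 1)

lemma force_eq (n : ℕ) (f : ℕ → Bool) : force n f = f n := by
  cases n <;> rfl

namespace Profile

/-- The profile of the same term for the mirror image of the sequence. -/
def flip (p : Profile) : Profile := ⟨p.down, p.up, p.weakDown, p.weakUp⟩

/-- The profile of a new last term, from the profiles of the earlier terms below and above it. -/
def next (lo hi : List Profile) : Profile :=
  let u := (lo.map fun p => p.weakUp + 1).foldr max 0
  let d := (hi.map fun p => p.weakDown + 1).foldr max 0
  { up := u
    down := d
    weakUp := (lo.map fun p => max 2 (p.down + 1)).foldr max u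
    weakDown := (hi.map fun p => max 2 (p.up + 1)).foldr max d }

/-- Two terms with profiles `p` and `q` satisfy the conditions of one of the constructors `ample`,
`low` and `high` of `State`. -/
def Suffices (t : ℕ) (p q : Profile) : Prop :=
  Ample t q.up p.down ∨
    Ample (t + 1) (q.weakUp + 1) p.down ∧ t ≤ q.weakDown + p.down ∧ t ≤ 2 * p.down ∨
    q.up + 1 ≤ p.down ∧ q.up + 1 ≤ q.weakUp ∧ t ≤ q.up + p.down

instance (t : ℕ) (p q : Profile) : Decidable (p.Suffices t q) :=
  inferInstanceAs (Decidable (_ ∨ _))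

/-- The computation of `f p`, with all lengths in `p` evaluated first. -/
def force (p : Profile) (f : Profile → Bool) : Bool :=
  Rollercoaster.force p.up fun u => Rollercoaster.force p.down fun d =>
    Rollercoaster.force p.weakUp fun a => Rollercoaster.force p.weakDown fun b => f ⟨u, d, a, b⟩

lemma force_eq (p : Profile) (f : Profile → Bool) : p.force f = f p := by
  simp only [force, Rollercoaster.force_eq]

end Profile

/-- Whether, wherever the next terms fall among the `t` terms with profiles `l`, listed from the
lowest term to the highest, two terms that suffice for `State` appear within `k` steps. -/
def search : ℕ → ℕ → List Profile → Bool
  | 0, _, _ => false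
  | k + 1, t, l => (List.range (l.length + 1)).all fun i =>
      (Profile.next (l.take i) (l.drop i)).force fun q =>
        (l.take i).any (fun p => p.Suffices (t + 1) q || q.flip.Suffices (t + 1) p.flip) ||
        (l.drop i).any (fun p => q.Suffices (t + 1) p || p.flip.Suffices (t + 1) q.flip) ||
        search k (t + 1) (l.take i ++ q :: l.drop i)

lemma search_eight : search 8 0 [] = true := by decide +kernel

variable {r : ℕ → ℕ → Prop} {t i j n : ℕ}

/-- The lengths in `p` are attained by subsequences of the first `t` terms that end with the
term `i`. -/
structure Profile.Attained (r : ℕ → ℕ → Prop) (t i : ℕ) (p : Profile) : Prop where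
  up : Up r t i p.up
  down : Down r t i p.down
  weakUp : WeakUp r t i p.weakUp
  weakDown : WeakDown r t i p.weakDown

lemma Profile.Attained.succ {p : Profile} (h : p.Attained r t i) : p.Attained r (t + 1) i :=
  ⟨h.up.succ, h.down.succ, h.weakUp.succ, h.weakDown.succ⟩

lemma Profile.Attained.flip {p : Profile} (h : p.Attained r t i) :
    p.flip.Attained (swap r) t i :=
  ⟨h.down, h.up, h.weakDown, h.weakUp⟩

lemma foldr_max_of_forall {P : ℕ → Prop} {l : List ℕ} {c : ℕ} (hc : P c) (hl : ∀ x ∈ l, P x) :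
    P (l.foldr max c) :=
  List.foldrRecOn l max hc fun b hb a ha => by
    rcases max_choice a b with h | h <;> rw [h]
    exacts [hl a ha, hb]

lemma Profile.next_attained {lo hi : List Profile} (hlo : ∀ p ∈ lo, ∃ i, r i t ∧ p.Attained r t i)
    (hhi : ∀ p ∈ hi, ∃ i, r t i ∧ p.Attained r t i) :
    (Profile.next lo hi).Attained r (t + 1) t := by
  have hu : Up r (t + 1) t (Profile.next lo hi).up := by
    refine foldr_max_of_forall ⟨t.lt_succ_self, .zero⟩ (List.forall_mem_map.2 fun p hp => ?_)
    obtain ⟨i, hit, h⟩ := hlo p hp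
    exact h.weakUp.up hit
  have hd : Down r (t + 1) t (Profile.next lo hi).down := by
    refine foldr_max_of_forall ⟨t.lt_succ_self, .zero⟩ (List.forall_mem_map.2 fun p hp => ?_)
    obtain ⟨i, hti, h⟩ := hhi p hp
    exact h.weakDown.down hti
  refine ⟨hu, hd, foldr_max_of_forall hu.weak (List.forall_mem_map.2 fun p hp => ?_),
    foldr_max_of_forall hd.weak (List.forall_mem_map.2 fun p hp => ?_)⟩
  · obtain ⟨i, hit, h⟩ := hlo p hp
    exact ⟨t.lt_succ_self, .max (.pair h.up.1 hit) (h.down.weakUp hit).2⟩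
  · obtain ⟨i, hti, h⟩ := hhi p hp
    exact ⟨t.lt_succ_self, .max (.pair h.up.1 hti) (h.up.weakDown hti).2⟩

lemma Profile.Suffices.state {p q : Profile} (h : p.Suffices t q) (hp : p.Attained r t i)
    (hq : q.Attained r t j) : State r t := by
  rcases h with h | ⟨h, hat, hdt⟩ | ⟨hud, hub, ht⟩
  · exact .ample hq.up hp.down h
  · exact .low hp.down hq.weakUp hq.weakDown h hat hdt
  · exact .high hp.down hq.up hq.weakUp hub hud ht

lemma state_or_state_swap_of_suffices {p q : Profile} (hp : p.Attained r t i)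
    (hq : q.Attained r t j) (h : p.Suffices t q ∨ q.flip.Suffices t p.flip) :
    State r t ∨ State (swap r) t :=
  h.imp (·.state hp hq) (·.state hq.flip hp.flip)

/-- The list `l` consists of terms, in increasing order for `r`, with profiles attained by them. -/
structure Realizes (r : ℕ → ℕ → Prop) (t : ℕ) (l : List (ℕ × Profile)) : Prop where
  pairwise : l.Pairwise fun a b => r a.1 b.1
  attained : ∀ a ∈ l, a.2.Attained r t a.1

lemma exists_eq_append_of_pairwise {α : Type*} {R : α → α → Prop} {P Q : α → Prop} {l : List α}
    (hl : l.Pairwise R) (hPQ : ∀ a ∈ l, P a ∨ Q a) (hQ : ∀ a b, Q a → R a b → Q b) :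
    ∃ l₁ l₂, l = l₁ ++ l₂ ∧ (∀ a ∈ l₁, P a) ∧ ∀ a ∈ l₂, Q a := by
  induction l with
  | nil => exact ⟨[], [], by simp⟩
  | cons a l ih =>
    rw [List.pairwise_cons] at hl
    rw [List.forall_mem_cons] at hPQ
    rcases hPQ.1 with ha | ha
    · obtain ⟨l₁, l₂, rfl, h₁, h₂⟩ := ih hl.2 hPQ.2
      exact ⟨a :: l₁, l₂, rfl, List.forall_mem_cons.2 ⟨ha, h₁⟩, h₂⟩
    · exact ⟨[], a :: l, rfl, by simp,
        List.forall_mem_cons.2 ⟨ha, fun b hb => hQ a b ha (hl.1 b hb)⟩⟩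

lemma Realizes.exists_insert [IsTrans ℕ r] {l : List (ℕ × Profile)} (h : Realizes r t l)
    (hr : ∀ i < t, r i t ∨ r t i) :
    ∃ l₁ l₂, l = l₁ ++ l₂ ∧ Realizes r (t + 1)
      (l₁ ++ (t, Profile.next (l₁.map Prod.snd) (l₂.map Prod.snd)) :: l₂) := by
  obtain ⟨l₁, l₂, rfl, h₁, h₂⟩ := exists_eq_append_of_pairwise h.pairwise
    (fun a ha => hr a.1 (h.attained a ha).up.1) fun _ _ => _root_.trans
  obtain ⟨hatt₁, hatt₂⟩ := List.forall_mem_append.1 h.attained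
  obtain ⟨hpair₁, hpair₂, hpair⟩ := List.pairwise_append.1 h.pairwise
  have hnew : (Profile.next (l₁.map Prod.snd) (l₂.map Prod.snd)).Attained r (t + 1) t :=
    Profile.next_attained
      (List.forall_mem_map.2 fun a ha => ⟨a.1, h₁ a ha, hatt₁ a ha⟩)
      (List.forall_mem_map.2 fun a ha => ⟨a.1, h₂ a ha, hatt₂ a ha⟩)
  refine ⟨l₁, l₂, rfl, ?_, ?_⟩
  · exact List.pairwise_append.2 ⟨hpair₁, List.pairwise_cons.2 ⟨h₂, hpair₂⟩, fun a ha =>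
      List.forall_mem_cons.2 ⟨h₁ a ha, hpair a ha⟩⟩
  · exact List.forall_mem_append.2 ⟨fun a ha => (hatt₁ a ha).succ,
      List.forall_mem_cons.2 ⟨hnew, fun a ha => (hatt₂ a ha).succ⟩⟩

lemma Realizes.exists_state [IsTrans ℕ r] (k : ℕ) {l : List (ℕ × Profile)} (h : Realizes r t l)
    (hr : ∀ j < t + k, ∀ i < j, r i j ∨ r j i) (hsearch : search k t (l.map Prod.snd) = true) :
    ∃ t' ≤ t + k, State r t' ∨ State (swap r) t' := by
  induction k generalizing t l with
  | zero => exact absurd hsearch (by simp [search])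
  | succ k ih =>
    obtain ⟨l₁, l₂, rfl, h'⟩ := h.exists_insert (hr t (by omega))
    obtain ⟨hatt₁, hatt₂⟩ := List.forall_mem_append.1 h'.attained
    obtain ⟨hnew, hatt₂⟩ := List.forall_mem_cons.1 hatt₂
    have hcase := List.all_eq_true.1 hsearch l₁.length (by simp)
    simp only [Profile.force_eq, List.map_append, List.take_left' (List.length_map _),
      List.drop_left' (List.length_map _), Bool.or_eq_true, List.any_eq_true, List.mem_map,
      decide_eq_true_eq] at hcase
    rcases hcase with (⟨_, ⟨a, ha, rfl⟩, hsuff⟩ | ⟨_, ⟨a, ha, rfl⟩, hsuff⟩) | hrest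
    · exact ⟨t + 1, by omega, state_or_state_swap_of_suffices (hatt₁ a ha) hnew hsuff⟩
    · exact ⟨t + 1, by omega, state_or_state_swap_of_suffices hnew (hatt₂ a ha) hsuff⟩
    · obtain ⟨t', ht', hstate⟩ := ih h' (fun j hj => hr j (by omega)) (by simpa using hrest)
      exact ⟨t', by omega, hstate⟩

lemma state_or_state_swap [IsTrans ℕ r] (hn : 8 ≤ n) (hr : ∀ j < n, ∀ i < j, r i j ∨ r j i) :
    State r n ∨ State (swap r) n := by
  obtain ⟨t, ht, hstate⟩ := Realizes.exists_state (r := r) (t := 0) (l := []) 8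
    ⟨.nil, by simp⟩ (fun j hj => hr j (by omega)) search_eight
  have htn : t ≤ n := by omega
  clear ht hn
  induction n, htn using Nat.le_induction with
  | base => exact hstate
  | succ n _ ih =>
    have hrn := hr n n.lt_succ_self
    rcases ih fun j hj => hr j (Nat.lt_succ_of_lt hj) with h | h
    · exact h.succ hrn
    · exact (h.succ fun i hi => (hrn i hi).symm).symm

lemma exists_inLongRun [IsTrans ℕ r] (hn : 8 ≤ n) (hr : ∀ j < n, ∀ i < j, r i j ∨ r j i) :
    ∃ (m : ℕ) (a : ℕ → ℕ), n ≤ 2 * m ∧ a 0 < n ∧ (∀ q, q + 1 < m → a (q + 1) < a q) ∧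
      ∀ q, q + 1 < m → InLongRun r a m q := by
  obtain ⟨i, l, hl, h⟩ : ∃ i l, n ≤ 2 * l ∧ (Up r n i l ∨ Down r n i l) := by
    rcases state_or_state_swap hn hr with h | h
    · exact h.exists_two_mul_ge
    · obtain ⟨i, l, hl, h⟩ := h.exists_two_mul_ge
      exact ⟨i, l, hl, h.symm⟩
  rcases h with ⟨hi, h⟩ | ⟨hi, h⟩ <;>
    obtain ⟨m, a, hlm, rfl, ha, hrun⟩ := h.exists_inLongRun (by omega)
  · exact ⟨m, a, by omega, hi, ha, hrun⟩
  · exact ⟨m, a, by omega, hi, ha, fun q hq => inLongRun_swap.1 (hrun q hq)⟩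

end Search

end Rollercoaster

/-- Every sequence of `n ≥ 8` distinct real numbers contains a subsequence of
length at least `⌈n/2⌉` that is a rollercoaster. -/
theorem statement0 (n : ℕ) (hn : 8 ≤ n) (s : Fin n → ℝ) (hs : Function.Injective s) :
    ∃ (m : ℕ) (f : Fin m → Fin n), StrictMono f ∧
      IsRollercoaster (s ∘ f) ∧ (n + 1) / 2 ≤ m := by
  let S : ℕ → ℝ := extend Fin.val s 0
  have hS : ∀ i : Fin n, S i = s i := Fin.val_injective.extend_apply s 0
  have : IsTrans ℕ fun i j => S i < S j := ⟨fun _ _ _ => lt_trans⟩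
  have hlt : ∀ j < n, ∀ i < j, S i < S j ∨ S j < S i := fun j hj i hi => by
    rw [hS ⟨i, hi.trans hj⟩, hS ⟨j, hj⟩]
    exact (hs.ne (Fin.ne_of_lt hi)).lt_or_gt
  obtain ⟨m, a, hm, ha0, ha, hrun⟩ := Rollercoaster.exists_inLongRun hn hlt
  obtain ⟨f, hf, hroll⟩ :=
    Rollercoaster.exists_isRollercoaster_of_inLongRun hs hS (by omega) ha0 ha hrun
  exact ⟨m, f, hf, hroll, by omega⟩
end

section
/- For every sequence of n ≥ 8 distinct real numbers there exist two subsequences, each of which is a rollercoaster, whose lengths sum to at least n. -/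
/-!
Scan the sequence from left to right and keep track of *rolls*, the subsequences that are
rollercoasters except that their last run may be unfinished (of length 2). Whatever the next term
is, it prolongs or turns back each roll. A short list of configurations of rolls, each containing
two rollercoasters of total length at least `n`, is closed under appending a term, so it suffices to
reach one of them within the first eight terms.

Up to turning the picture upside down, the only start that avoids configurations for four terms is
a zigzag whose last value ends both an ascending and a descending pair; such a fork leads to a
configuration four terms later.
-/

open Function (swap)

section Rollercoaster

variable {α : Type*}

/-- Every step of the finite sequence `x 0, …, x (m - 1)` belongs to three consecutive terms that
are `r`-increasing or `r`-decreasing. For the order of `ℝ` this says that all runs have length at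
least 3, in a form that survives prolonging the sequence. -/
def TripleCover (r : α → α → Prop) (x : ℕ → α) (m : ℕ) : Prop :=
  ∀ k, k + 1 < m → ∃ a, a ≤ k ∧ k ≤ a + 1 ∧ a + 2 < m ∧
    (r (x a) (x (a + 1)) ∧ r (x (a + 1)) (x (a + 2)) ∨
      r (x (a + 1)) (x a) ∧ r (x (a + 2)) (x (a + 1)))

protected theorem TripleCover.swap {r : α → α → Prop} {x : ℕ → α} {m : ℕ} (h : TripleCover r x m) :
    TripleCover (swap r) x m := fun k hk =>
  let ⟨a, hak, hka, ham, htri⟩ := h k hk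
  ⟨a, hak, hka, ham, htri.symm⟩

theorem TripleCover.congr {r : α → α → Prop} {x y : ℕ → α} {m : ℕ} (h : TripleCover r x m)
    (hxy : Set.EqOn x y (Set.Iio m)) : TripleCover r y m := fun k hk => by
  obtain ⟨a, hak, hka, ham, htri⟩ := h k hk
  rw [hxy (show a < m by omega), hxy (show a + 1 < m by omega), hxy ham] at htri
  exact ⟨a, hak, hka, ham, htri⟩

theorem TripleCover.append_triple {r : α → α → Prop} {x : ℕ → α} {m a : ℕ}
    (h : TripleCover r x m) (ham : a < m) (hma : m ≤ a + 3) (h₁ : r (x a) (x (a + 1)))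
    (h₂ : r (x (a + 1)) (x (a + 2))) : TripleCover r x (a + 3) := fun k hk => by
  rcases lt_or_ge (k + 1) m with hkm | hkm
  · obtain ⟨b, hbk, hkb, hbm, htri⟩ := h k hkm
    exact ⟨b, hbk, hkb, by omega, htri⟩
  · exact ⟨a, by omega, by omega, by omega, .inl ⟨h₁, h₂⟩⟩

theorem strictMonoOn_Icc_add_two [Preorder α] {x : ℕ → α} {a : ℕ} (h₁ : x a < x (a + 1))
    (h₂ : x (a + 1) < x (a + 2)) : StrictMonoOn x (Set.Icc a (a + 2)) := by
  refine strictMonoOn_of_lt_add_one Set.ordConnected_Icc fun k _ hk hk' => ?_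
  obtain rfl | rfl : k = a ∨ k = a + 1 := by simp only [Set.mem_Icc] at hk hk'; omega
  exacts [h₁, h₂]

theorem strictAntiOn_Icc_add_two [Preorder α] {x : ℕ → α} {a : ℕ} (h₁ : x (a + 1) < x a)
    (h₂ : x (a + 2) < x (a + 1)) : StrictAntiOn x (Set.Icc a (a + 2)) :=
  strictMonoOn_Icc_add_two (α := αᵒᵈ) h₁ h₂

theorem TripleCover.isRollercoaster {x : ℕ → ℝ} {m : ℕ} (h : TripleCover (· < ·) x m)
    (hm : 2 ≤ m) (hx : Function.Injective x) : IsRollercoaster fun k : Fin m => x k := by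
  refine ⟨?_, hx.comp Fin.val_injective, fun i j ⟨_, _, hmax⟩ => ?_⟩
  · obtain ⟨a, -, -, ham, -⟩ := h 0 (by omega)
    omega
  by_contra! hij
  obtain ⟨k, hkm, hki, hjk⟩ : ∃ k, k + 1 < m ∧ k ≤ i ∧ j ≤ k + 1 := by
    rcases lt_or_ge (i + 1 : ℕ) m with him | him
    · exact ⟨i, him, le_rfl, by omega⟩
    · exact ⟨i - 1, by omega, by omega, by omega⟩
  obtain ⟨a, hak, hka, ham, htri⟩ := h k hkm
  have hmono : StrictMonoOn x (Set.Icc a (a + 2)) ∨ StrictAntiOn x (Set.Icc a (a + 2)) :=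
    htri.imp (fun h => strictMonoOn_Icc_add_two h.1 h.2)
      fun h => strictAntiOn_Icc_add_two h.1 h.2
  refine hmax ⟨a, by omega⟩ ⟨a + 2, ham⟩ (Fin.le_def.2 (hak.trans hki))
    (Fin.le_def.2 (hjk.trans (by simp only [add_le_add_iff_right]; omega)))
    (by simp only [ne_eq, Fin.ext_iff]; omega) ?_
  exact hmono.imp (fun h p hp q hq => h ⟨hp.1, hp.2⟩ ⟨hq.1, hq.2⟩)
    fun h p hp q hq => h ⟨hp.1, hp.2⟩ ⟨hq.1, hq.2⟩

theorem exists_strictMono_eqOn_Iic {g : ℕ → ℕ} (hg : StrictMono g) {m n : ℕ} (h : g m < n) :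
    ∃ g' : ℕ → ℕ, StrictMono g' ∧ g' (m + 1) = n ∧ Set.EqOn g' g (Set.Iic m) := by
  refine ⟨fun k => if k ≤ m then g k else n + (k - (m + 1)), ?_, by simp, fun k hk => if_pos hk⟩
  refine strictMono_nat_of_lt_succ fun k => ?_
  have hk : g k < g (k + 1) := hg k.lt_succ_self
  rcases lt_trichotomy k m with hkm | rfl | hkm <;> grind

/-- `Roll s r n full x L` says that some subsequence of `s 0, …, s (n - 1)` has length `L`, ends
with an `r`-step to the value `x`, and has all runs of length at least 3, except that the last run
has length 2 if `full` is `false`. Runs are taken with respect to `r` and `swap r`, so `s` is viewed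
upside down by passing from `r` to `swap r`. -/
inductive Roll (s : ℕ → α) : (α → α → Prop) → ℕ → Bool → α → ℕ → Prop
  | pair {r : α → α → Prop} {i n : ℕ} (hi : i < n) (h : r (s i) (s n)) :
      Roll s r (n + 1) false (s n) 2
  | skip {r : α → α → Prop} {n : ℕ} {full : Bool} {x : α} {L : ℕ} (h : Roll s r n full x L) :
      Roll s r (n + 1) full x L
  | step {r : α → α → Prop} {n : ℕ} {full : Bool} {x : α} {L : ℕ} (h : Roll s r n full x L)
      (hx : r x (s n)) : Roll s r (n + 1) true (s n) (L + 1)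
  | turn {r : α → α → Prop} {n : ℕ} {x : α} {L : ℕ} (h : Roll s r n true x L)
      (hx : r (s n) x) : Roll s (swap r) (n + 1) false (s n) (L + 1)

variable {s : ℕ → α} {r : α → α → Prop} {n : ℕ} {full : Bool} {x : α} {L : ℕ}

theorem Roll.exists_strictMono (h : Roll s r n full x L) :
    ∃ (m : ℕ) (g : ℕ → ℕ), L = m + 2 ∧ StrictMono g ∧ g (m + 1) < n ∧ s (g (m + 1)) = x ∧
      r (s (g m)) x ∧ TripleCover r (s ∘ g) (m + 1 + full.toNat) := by
  induction h with
  | @pair r i n hi h =>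
    obtain ⟨g, hg, hgn, hgi⟩ := exists_strictMono_eqOn_Iic
      (add_right_strictMono (a := i)) (m := 0) (n := n) (by simpa using hi)
    have hg0 : g 0 = i := by simpa using hgi (Set.mem_Iic.2 le_rfl)
    exact ⟨0, g, rfl, hg, by simp [hgn], by simp [hgn], by rwa [hg0], fun k hk => by simp at hk⟩
  | skip _ ih =>
    obtain ⟨m, g, hL, hg, hgn, ih⟩ := ih
    exact ⟨m, g, hL, hg, by omega, ih⟩
  | @step r n full x L _ hx ih =>
    obtain ⟨m, g, rfl, hg, hgn, rfl, hr, hcov⟩ := ih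
    obtain ⟨g', hg', hgn', heq⟩ := exists_strictMono_eqOn_Iic hg hgn
    have hm : g' m = g m := heq (Set.mem_Iic.2 (by omega))
    have hm1 : g' (m + 1) = g (m + 1) := heq (Set.mem_Iic.2 le_rfl)
    have hfull := full.toNat_le
    refine ⟨m + 1, g', rfl, hg', by omega, by rw [hgn'], by rwa [hm1], ?_⟩
    refine TripleCover.append_triple (m := m + 1 + full.toNat) ?_ (by omega) (by omega) ?_ ?_
    · exact hcov.congr (heq.symm.comp_left.mono fun k hk =>
        Nat.le_of_lt_succ (lt_of_lt_of_le hk (by omega)))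
    · simpa only [Function.comp_apply, hm, hm1] using hr
    · simpa only [Function.comp_apply, hm1, hgn'] using hx
  | @turn r n x L _ hx ih =>
    obtain ⟨m, g, rfl, hg, hgn, rfl, -, hcov⟩ := ih
    obtain ⟨g', hg', hgn', heq⟩ := exists_strictMono_eqOn_Iic hg hgn
    have hm1 : g' (m + 1) = g (m + 1) := heq (Set.mem_Iic.2 le_rfl)
    refine ⟨m + 1, g', rfl, hg', by omega, by rw [hgn'], by rwa [hm1], ?_⟩
    exact hcov.swap.congr (heq.symm.comp_left.mono fun k hk => Nat.le_of_lt_succ hk)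

theorem Roll.mem_image (h : Roll s r n full x L) : x ∈ s '' Set.Iio n := by
  obtain ⟨m, g, -, -, hgn, hx, -⟩ := h.exists_strictMono
  exact ⟨_, hgn, hx⟩

theorem Roll.max_length {L' : ℕ} (h : Roll s r n full x L) (h' : Roll s r n full x L') :
    Roll s r n full x (max L L') := by
  rcases le_total L L' with hL | hL <;> simpa [hL]

/-- A complete rollercoaster of length `L` among the first `n` terms of `s`, with the last step in
either direction. -/
def HasRoll (s : ℕ → α) (r : α → α → Prop) (n L : ℕ) : Prop :=
  ∃ x, Roll s r n true x L ∨ Roll s (swap r) n true x L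

theorem HasRoll.exists_isRollercoaster {s : ℕ → ℝ} (hs : Function.Injective s)
    (h : HasRoll s (· < ·) n L) :
    ∃ f : Fin L → Fin n, StrictMono f ∧ IsRollercoaster fun k => s (f k) := by
  obtain ⟨m, g, rfl, hg, hgn, hcov⟩ : ∃ (m : ℕ) (g : ℕ → ℕ), L = m + 2 ∧ StrictMono g ∧
      g (m + 1) < n ∧ TripleCover (· < ·) (s ∘ g) (m + 2) := by
    obtain ⟨x, h | h⟩ := h
    · obtain ⟨m, g, hL, hg, hgn, -, -, hcov⟩ := h.exists_strictMono
      exact ⟨m, g, hL, hg, hgn, hcov⟩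
    · obtain ⟨m, g, hL, hg, hgn, -, -, hcov⟩ := h.exists_strictMono
      exact ⟨m, g, hL, hg, hgn, hcov.swap⟩
  have hlt (k : Fin (m + 2)) : g k < n := (hg.monotone (by omega)).trans_lt hgn
  exact ⟨fun k => ⟨g k, hlt k⟩, fun _ _ hkl => hg hkl,
    hcov.isRollercoaster (by omega) (hs.comp hg.injective)⟩

/-- A value `x` that complements a full roll of length `L` which ends with an `r`-step: a roll
ending at `x` has total length at least `n` with it, and can be prolonged by an `r`-step. The
condition `n + 1 ≤ 2 * L` pays for the rolls that become unfinished by that step. -/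
inductive Lead (s : ℕ → α) (r : α → α → Prop) (n : ℕ) (x : α) (L : ℕ) : Prop
  | up {full : Bool} {M : ℕ} (h : Roll s r n full x M) (hM : n ≤ M + L)
  | down {M : ℕ} (h : Roll s (swap r) n true x M) (hM : n ≤ M + L) (hL : n + 1 ≤ 2 * L)
  | single (hM : n ≤ 1 + L) (hL : n + 1 ≤ 2 * L)

theorem Lead.succ (h : Lead s r n x L) : Lead s r (n + 1) x (L + 1) := by
  cases h with
  | up h _ => exact .up h.skip (by omega)
  | down h _ _ => exact .down h.skip (by omega) (by omega)
  | single _ _ => exact .single (by omega) (by omega)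

/-- Two unfinished rolls of length `M` that end at the same value `x`, one with an `r`-step and the
other with a `swap r`-step, so that any further term completes one of them. -/
def Fork (s : ℕ → α) (r : α → α → Prop) (n : ℕ) (x : α) (M : ℕ) : Prop :=
  Roll s r n false x M ∧ Roll s (swap r) n false x M

protected theorem Fork.swap {M : ℕ} (h : Fork s r n x M) : Fork s (swap r) n x M := And.symm h

theorem Fork.skip {M : ℕ} (h : Fork s r n x M) : Fork s r (n + 1) x M := ⟨h.1.skip, h.2.skip⟩

/-- The states of the scan of `s` after `n` terms. In every state there are two full rolls of total
length at least `n`, and by `Config.succ` every next term leads to another state, up to exchanging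
`r` and `swap r`. -/
inductive Config (s : ℕ → α) (r : α → α → Prop) (n : ℕ) : Prop
  | split {a d : α} {L₁ L₂ : ℕ} (hU : Roll s r n true a L₁) (hD : Roll s (swap r) n true d L₂)
      (hL : n + 1 ≤ L₁ + L₂)
  | gap {a d x : α} {L₁ L₂ : ℕ} (hU : Roll s r n true a L₁) (hD : Roll s (swap r) n true d L₂)
      (hU' : Roll s (swap r) n false x (L₁ + 1)) (hD' : Roll s r n false x (L₂ + 1))
      (hL : n ≤ L₁ + L₂)
  | nested {x y : α} {L₁ L₂ : ℕ} (hI : Roll s r n true x L₁) (hJ : Roll s r n true y L₂)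
      (hJ' : Roll s (swap r) n false x (L₂ + 1)) (hL : n ≤ L₁ + L₂)
  | led {k x : α} {L M : ℕ} (hK : Roll s r n true k L) (hW : Roll s (swap r) n false x M)
      (hM : n + 1 ≤ M + L) (hL : n ≤ 2 * L) (lead : Lead s r n x L)
  | ascent {k : α} {L : ℕ} (hK : Roll s r n true k L) (hn : n ≤ L) (hL : n + 2 ≤ 2 * L)
  | fork {k x : α} {L M : ℕ} (hK : Roll s r n true k L) (hF : Fork s r n x M)
      (hM : n ≤ M + L) (hL : n + 2 ≤ 2 * L)

theorem Config.exists_hasRoll (h : Config s r n) :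
    ∃ L₁ L₂, n ≤ L₁ + L₂ ∧ HasRoll s r n L₁ ∧ HasRoll s r n L₂ := by
  cases h with
  | split hU hD _ => exact ⟨_, _, by omega, ⟨_, .inl hU⟩, ⟨_, .inr hD⟩⟩
  | gap hU hD _ _ hL => exact ⟨_, _, hL, ⟨_, .inl hU⟩, ⟨_, .inr hD⟩⟩
  | nested hI hJ _ hL => exact ⟨_, _, hL, ⟨_, .inl hI⟩, ⟨_, .inl hJ⟩⟩
  | led hK _ _ _ _ => exact ⟨_, _, by omega, ⟨_, .inl hK⟩, ⟨_, .inl hK⟩⟩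
  | ascent hK _ _ => exact ⟨_, _, by omega, ⟨_, .inl hK⟩, ⟨_, .inl hK⟩⟩
  | fork hK _ _ _ => exact ⟨_, _, by omega, ⟨_, .inl hK⟩, ⟨_, .inl hK⟩⟩

/-- A configuration of the first `n` terms of `s`, viewed either way up. -/
def HasConfig (s : ℕ → α) (r : α → α → Prop) (n : ℕ) : Prop :=
  Config s r n ∨ Config s (swap r) n

protected theorem HasConfig.swap (h : HasConfig s r n) : HasConfig s (swap r) n := Or.symm h

theorem HasConfig.exists_hasRoll (h : HasConfig s r n) :
    ∃ L₁ L₂, n ≤ L₁ + L₂ ∧ HasRoll s r n L₁ ∧ HasRoll s r n L₂ := by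
  rcases h with h | h
  · exact h.exists_hasRoll
  · obtain ⟨L₁, L₂, hL, ⟨x, h₁⟩, ⟨y, h₂⟩⟩ := h.exists_hasRoll
    exact ⟨L₁, L₂, hL, ⟨x, h₁.symm⟩, ⟨y, h₂.symm⟩⟩

theorem rel_or_rel (r : α → α → Prop) [Std.Trichotomous r] (hs : Function.Injective s) {i j : ℕ}
    (hij : i ≠ j) : r (s i) (s j) ∨ r (s j) (s i) :=
  isChain_of_trichotomous Set.univ trivial trivial (hs.ne hij)

theorem Roll.rel_or_rel (r' : α → α → Prop) [Std.Trichotomous r'] (hs : Function.Injective s)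
    (h : Roll s r n full x L) : r' x (s n) ∨ r' (s n) x := by
  obtain ⟨i, hi, rfl⟩ := h.mem_image
  exact _root_.rel_or_rel r' hs (Set.mem_Iio.1 hi).ne

theorem config_succ_of_gap {a : α} {L₁ L₂ : ℕ} (hU : Roll s r n true a L₁)
    (hU' : Roll s (swap r) n false x (L₁ + 1)) (hD' : Roll s r n false x (L₂ + 1))
    (hL : n ≤ L₁ + L₂) (hx : r x (s n)) (ha : r a (s n) ∨ r (s n) a) : Config s r (n + 1) := by
  rcases ha with ha | ha
  · exact .led ((hU.step ha).max_length (hD'.step hx)) hU'.skip (by omega) (by omega)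
      (.up hD'.skip (by omega))
  · exact .nested (hD'.step hx) hU.skip (hU.turn ha) (by omega)

theorem config_succ_of_nested {y : α} {L₁ L₂ : ℕ} (hI : Roll s r n true x L₁)
    (hJ : Roll s r n true y L₂) (hJ' : Roll s (swap r) n false x (L₂ + 1)) (hL : n ≤ L₁ + L₂)
    (hx : r x (s n) ∨ r (s n) x) (hy : r y (s n) ∨ r (s n) y) : Config s r (n + 1) := by
  rcases hx with hx | hx
  · rcases hy with hy | hy
    · exact .led ((hI.step hx).max_length (hJ.step hy)) hJ'.skip (by omega) (by omega)
        (.up hI.skip (by omega))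
    · exact .nested (hI.step hx) hJ.skip (hJ.turn hy) (by omega)
  · exact .split hI.skip (hJ'.step hx) (by omega)

theorem config_succ_of_lead {k : α} (hK : Roll s r n true k L)
    (hx : x ∈ s '' Set.Iio n) (lead : Lead s r n x L) (hxn : r x (s n)) (hk : r (s n) k) :
    Config s r (n + 1) := by
  have hK' := hK.turn hk
  cases lead with
  | up h _ => exact .nested (h.step hxn) hK.skip hK' (by omega)
  | down h _ _ =>
    exact .led hK.skip hK' (by omega) (by omega) (.up (h.turn hxn) (by omega))
  | single _ _ =>
    obtain ⟨i, hi, rfl⟩ := hx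
    exact .led hK.skip hK' (by omega) (by omega) (.up (.pair hi hxn) (by omega))

theorem Fork.lead_succ [Std.Trichotomous r] (hs : Function.Injective s) {M : ℕ}
    (hF : Fork s r n x M) (hM : n ≤ M + L) (hL : n + 2 ≤ 2 * L) :
    Lead s r (n + 1) (s n) L := by
  rcases hF.1.rel_or_rel r hs with hx | hx
  · exact .up (hF.1.step hx) (by omega)
  · exact .down (hF.2.step hx) (by omega) (by omega)

theorem Config.succ [Std.Trichotomous r] (hs : Function.Injective s) (h : Config s r n) :
    HasConfig s r (n + 1) := by
  cases h with
  | split hU hD _ =>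
    left
    rcases hU.rel_or_rel r hs with ha | ha
    · exact .split (hU.step ha) hD.skip (by omega)
    rcases hD.rel_or_rel r hs with hd | hd
    · exact .gap hU.skip hD.skip (hU.turn ha) (hD.turn hd) (by omega)
    · exact .split hU.skip (hD.step hd) (by omega)
  | gap hU hD hU' hD' hL =>
    rcases hD'.rel_or_rel r hs with hx | hx
    · exact .inl (config_succ_of_gap hU hU' hD' hL hx (hU.rel_or_rel r hs))
    · exact .inr (config_succ_of_gap hD hD' hU' (by omega) hx (hD.rel_or_rel (swap r) hs))
  | nested hI hJ hJ' hL =>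
    exact .inl (config_succ_of_nested hI hJ hJ' hL (hI.rel_or_rel r hs) (hJ.rel_or_rel r hs))
  | led hK hW _ hL lead =>
    left
    rcases hW.rel_or_rel r hs with hx | hx
    · rcases hK.rel_or_rel r hs with hk | hk
      · exact .led (hK.step hk) hW.skip (by omega) (by omega) lead.succ
      · exact config_succ_of_lead hK hW.mem_image lead hx hk
    · exact .split hK.skip (hW.step hx) (by omega)
  | ascent hK _ _ =>
    left
    rcases hK.rel_or_rel r hs with hk | hk
    · exact .ascent (hK.step hk) (by omega) (by omega)
    · exact .led hK.skip (hK.turn hk) (by omega) (by omega) (.single (by omega) (by omega))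
  | fork hK hF hM hL =>
    left
    rcases hK.rel_or_rel r hs with hk | hk
    · exact .fork (hK.step hk) hF.skip (by omega) (by omega)
    · exact .led hK.skip (hK.turn hk) (by omega) (by omega) (hF.lead_succ hs hM hL)

theorem HasConfig.succ [Std.Trichotomous r] (hs : Function.Injective s) (h : HasConfig s r n) :
    HasConfig s r (n + 1) :=
  h.elim (Config.succ hs) fun h => (h.succ hs).swap

theorem HasConfig.mono [Std.Trichotomous r] (hs : Function.Injective s) {m : ℕ}
    (h : HasConfig s r m) (hmn : m ≤ n) : HasConfig s r n :=
  Nat.le_induction h (fun _ _ => HasConfig.succ hs) n hmn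

theorem Fork.config_succ {M : ℕ} (hF : Fork s r n x M) (hn : n + 1 ≤ 2 * M) (hx : r x (s n)) :
    Config s r (n + 1) :=
  .led (hF.1.step hx) hF.2.skip (by omega) (by omega) (.up hF.1.skip (by omega))

theorem Fork.hasConfig_succ [Std.Trichotomous r] (hs : Function.Injective s) {M : ℕ}
    (hF : Fork s r n x M) (hn : n + 1 ≤ 2 * M) : HasConfig s r (n + 1) :=
  (hF.1.rel_or_rel r hs).imp (hF.config_succ hn) (hF.swap.config_succ hn)

theorem Fork.hasConfig_add_four_of_rel [Std.Trichotomous r] (hs : Function.Injective s) {M : ℕ}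
    (hF : Fork s r n x M) (hn : n ≤ 2 * M) (h : r (s n) (s (n + 1))) :
    HasConfig s r (n + 4) := by
  rcases hF.1.rel_or_rel r hs with hxn | hxn
  · have hK : Roll s r (n + 2) true (s (n + 1)) (M + 2) := (hF.1.step hxn).step h
    have hconfig : Config s r (n + 2) := .fork hK hF.skip.skip (by omega) (by omega)
    exact HasConfig.mono hs (.inl hconfig) (by omega)
  have hD : Roll s (swap r) (n + 1) true (s n) (M + 1) := hF.2.step hxn
  have hDU : Roll s r (n + 2) false (s (n + 1)) (M + 2) := hD.turn h
  rcases hF.1.skip.rel_or_rel r hs with hx₁ | hx₁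
  · have hU : Roll s r (n + 2) true (s (n + 1)) (M + 1) := hF.1.skip.step hx₁
    rcases hDU.rel_or_rel r hs with h₁₂ | h₁₂
    · have hconfig : Config s r (n + 3) := .split (hDU.step h₁₂) hD.skip.skip (by omega)
      exact HasConfig.mono hs (.inl hconfig) (by omega)
    rcases hD.skip.rel_or_rel r hs with h₀₂ | h₀₂
    · have hfork : Fork s r (n + 3) (s (n + 2)) (M + 2) := ⟨hD.skip.turn h₀₂, hU.turn h₁₂⟩
      exact hfork.hasConfig_succ hs (by omega)
    · have hconfig : Config s (swap r) (n + 3) :=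
        .led (hD.skip.step h₀₂) hDU.skip (by omega) (by omega)
          (.down hU.skip (by omega) (by omega))
      exact HasConfig.mono hs (.inr hconfig) (by omega)
  · have hconfig : Config s (swap r) (n + 2) :=
      .nested (hF.2.skip.step hx₁) hD.skip hDU (by omega)
    exact HasConfig.mono hs (.inr hconfig) (by omega)

theorem Fork.hasConfig_add_four [Std.Trichotomous r] (hs : Function.Injective s) {M : ℕ}
    (hF : Fork s r n x M) (hn : n ≤ 2 * M) : HasConfig s r (n + 4) := by
  rcases rel_or_rel r hs n.lt_succ_self.ne with h | h
  · exact hF.hasConfig_add_four_of_rel hs hn h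
  · exact (hF.swap.hasConfig_add_four_of_rel hs hn h).swap

theorem hasConfig_four_or_fork_of_rel [Std.Trichotomous r] (hs : Function.Injective s)
    (h₀₁ : r (s 0) (s 1)) : HasConfig s r 4 ∨ Fork s r 4 (s 3) 2 := by
  have hU : Roll s r 2 false (s 1) 2 := .pair zero_lt_one h₀₁
  rcases rel_or_rel r hs (show 1 ≠ 2 by decide) with h₁₂ | h₂₁
  · have hconfig : Config s r 3 := .ascent (hU.step h₁₂) (by decide) (by decide)
    exact .inl (HasConfig.mono hs (.inl hconfig) (by decide))
  have hD : Roll s (swap r) 3 false (s 2) 2 := .pair one_lt_two h₂₁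
  rcases rel_or_rel r hs (show 2 ≠ 3 by decide) with h₂₃ | h₃₂
  · rcases rel_or_rel r hs (show 1 ≠ 3 by decide) with h₁₃ | h₃₁
    · exact .inl (.inl (.led (hU.skip.step h₁₃) hD.skip (by decide) (by decide)
        (.single (by decide) (by decide))))
    · exact .inr ⟨.pair (by decide) h₂₃, .pair (by decide) h₃₁⟩
  · exact .inl (.inr (.led (hD.step h₃₂) hU.skip.skip (by decide) (by decide)
      (.single (by decide) (by decide))))

theorem hasConfig_eight [Std.Trichotomous r] (hs : Function.Injective s) : HasConfig s r 8 := by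
  have of_rel (r : α → α → Prop) [Std.Trichotomous r] (h₀₁ : r (s 0) (s 1)) : HasConfig s r 8 :=
    (hasConfig_four_or_fork_of_rel hs h₀₁).elim (fun h => h.mono hs (by decide))
      fun hF => hF.hasConfig_add_four hs (by decide)
  rcases rel_or_rel r hs zero_ne_one with h | h
  · exact of_rel r h
  · exact (of_rel (swap r) h).swap

theorem exists_injective_extension [Infinite α] {n : ℕ} {s : Fin n → α}
    (hs : Function.Injective s) :
    ∃ t : ℕ → α, Function.Injective t ∧ ∀ k : Fin n, t k = s k := by
  have e : ℕ ↪ ↑(Set.range s)ᶜ := (Set.finite_range s).infinite_compl.natEmbedding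
  refine ⟨fun k => if h : k < n then s ⟨k, h⟩ else e k, ?_, fun k => dif_pos k.2⟩
  refine Function.Injective.dite (· < n) (f := fun k => s ⟨k, k.2⟩) (f' := fun k => e k)
    (fun k l hkl => ?_) (fun k l hkl => ?_) fun {k l hk hl} hkl => ?_
  · exact Subtype.ext (Fin.mk.inj_iff.1 (hs hkl))
  · exact Subtype.ext (e.injective (Subtype.ext hkl))
  · exact (e l).2 ⟨_, hkl⟩

end Rollercoaster

/-- Every sequence of `n ≥ 8` distinct real numbers contains two rollercoaster
subsequences whose lengths sum to at least `n`. -/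
theorem statement2 (n : ℕ) (hn : 8 ≤ n) (s : Fin n → ℝ) (hs : Function.Injective s) :
    ∃ (m₁ m₂ : ℕ) (f₁ : Fin m₁ → Fin n) (f₂ : Fin m₂ → Fin n),
      StrictMono f₁ ∧ StrictMono f₂ ∧
      IsRollercoaster (s ∘ f₁) ∧ IsRollercoaster (s ∘ f₂) ∧ n ≤ m₁ + m₂ := by
  obtain ⟨t, ht, hts⟩ := exists_injective_extension hs
  have hconfig : HasConfig t (· < ·) n := (hasConfig_eight ht).mono ht hn
  obtain ⟨L₁, L₂, hL, h₁, h₂⟩ := hconfig.exists_hasRoll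
  obtain ⟨f₁, hf₁, hr₁⟩ := h₁.exists_isRollercoaster ht
  obtain ⟨f₂, hf₂, hr₂⟩ := h₂.exists_isRollercoaster ht
  simp only [hts] at hr₁ hr₂
  exact ⟨L₁, L₂, f₁, f₂, hf₁, hf₂, hr₁, hr₂, hL⟩
end

section
/- Let k ≥ 4 be an integer. Then every sequence of n ≥ (k−1)² + 1 distinct real numbers contains a subsequence that is a k-rollercoaster of length at least n/(2(k−1)) − 3k/2 (as a real-number inequality on the length). -/
/-- For an integer `k ≥ 3`, a *k-rollercoaster* is a finite sequence of
distinct real numbers with at least `k` terms in which every run has length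
at least `k`. -/
def IsKRollercoaster (k : ℕ) {m : ℕ} (t : Fin m → ℝ) : Prop :=
  k ≤ m ∧ Function.Injective t ∧
  ∀ i j : Fin m, IsRun t i j → k ≤ (j : ℕ) - (i : ℕ) + 1

/-!
The subsequence is built greedily while reading `s` from left to right. At any time there are two
candidates, one ending with a decreasing and the other with an increasing block of length at least
`k`. As soon as the terms read since the last extension contain both an increasing and a decreasing
subsequence of length `k`, the candidate that ends with a decreasing block is extended by an
increasing one, and conversely. The two candidates thereby exchange roles, and at the junction the
new block absorbs one old term or the old block absorbs one new term, so no run is short.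

One term earlier one of the two directions, say the increasing one, admitted no `k` terms. By
Erdős–Szekeres those terms contain a decreasing subsequence of at least a fraction `1 / (k - 1)` of
their number, so the extensions keep the total length of the two candidates at least `1 / (k - 1)`
times the number of terms read, and the longer one has at least half of this. Only the terms read
after the last extension can be lost, and a loss is at most `(k - 1) ^ 2` terms.
-/

open Finset Function OrderDual

section Blocks

variable {ι α : Type*} [LinearOrder ι] [LinearOrder α] {s : ι → α} {k : ℕ} {A B I : Finset ι}

/-- `s` is strictly monotonic on `B`, in either direction; this is the condition on the block in
`IsRun`. -/
def StrictMonotonicOn (s : ι → α) (B : Set ι) : Prop :=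
  StrictMonoOn s B ∨ StrictAntiOn s B

/-- `B` is a contiguous block of the finite index set `A`. Subsequences of `s` are encoded by their
sets of indices. -/
def IsBlock (A B : Finset ι) : Prop :=
  B ⊆ A ∧ ∀ u ∈ B, ∀ v ∈ B, ∀ z ∈ A, u ≤ z → z ≤ v → z ∈ B

/-- Any two consecutive indices `x < y` of `A` lie in a common strictly monotonic block of `A` with
at least `k` terms. This local condition replaces the condition on maximal runs in the definition
of a `k`-rollercoaster. -/
def CoveredByBlocks (k : ℕ) (s : ι → α) (A : Finset ι) : Prop :=
  ∀ x ∈ A, ∀ y ∈ A, x < y → (∀ z ∈ A, x < z → y ≤ z) →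
    ∃ B, IsBlock A B ∧ x ∈ B ∧ y ∈ B ∧ k ≤ #B ∧ StrictMonotonicOn s B

/-- The subsequence of `s` indexed by `A` is covered by monotonic blocks of length at least
`k` and, unless empty, ends with a strictly decreasing block of length at least `k`. The mirror
notion, ending with an increasing block, is `EndsFalling k (toDual ∘ s) A`. -/
structure EndsFalling (k : ℕ) (s : ι → α) (A : Finset ι) : Prop where
  covered : CoveredByBlocks k s A
  exists_suffix : A.Nonempty →
    ∃ E ⊆ A, (∀ e ∈ E, ∀ z ∈ A, e ≤ z → z ∈ E) ∧ k ≤ #E ∧ StrictAntiOn s E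

lemma coveredByBlocks_toDual_comp_iff :
    CoveredByBlocks k (toDual ∘ s) A ↔ CoveredByBlocks k s A := by
  have hswap (B : Finset ι) : StrictMonotonicOn (toDual ∘ s) B ↔ StrictMonotonicOn s B :=
    or_comm
  simp only [CoveredByBlocks, hswap]

lemma endsFalling_empty : EndsFalling k s ∅ :=
  ⟨by simp [CoveredByBlocks], by simp⟩

lemma EndsFalling.le_card (h : EndsFalling k s A) (hA : A.Nonempty) : k ≤ #A := by
  obtain ⟨E, hEA, -, hkE, -⟩ := h.exists_suffix hA
  exact hkE.trans (card_le_card hEA)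

lemma card_union_of_forall_lt (hAI : ∀ a ∈ A, ∀ b ∈ I, a < b) : #(A ∪ I) = #A + #I :=
  card_union_of_disjoint (disjoint_left.2 fun i hiA hiI => (hAI i hiA i hiI).false)

lemma IsBlock.union_of_forall_lt (h : IsBlock A B) (hAI : ∀ a ∈ A, ∀ b ∈ I, a < b) :
    IsBlock (A ∪ I) B := by
  refine ⟨h.1.trans subset_union_left, fun u hu v hv z hz huz hzv => ?_⟩
  rcases mem_union.1 hz with hz | hz
  · exact h.2 u hu v hv z hz huz hzv
  · exact absurd (hAI v (h.1 hv) z hz) hzv.not_gt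

lemma isBlock_union_of_forall_lt (hAI : ∀ a ∈ A, ∀ b ∈ I, a < b) : IsBlock (A ∪ I) I := by
  refine ⟨subset_union_right, fun u hu v _ z hz huz _ => ?_⟩
  exact (mem_union.1 hz).resolve_left fun hz => (hAI z hz u hu).not_ge huz

/-- If `s` rises from `x` to `y`, then `x` prolongs the rising part `I`; otherwise `y` prolongs the
falling end of `A`. -/
lemma EndsFalling.exists_block_of_junction (hs : Injective s) (hk : 0 < k)
    (hA : EndsFalling k s A) (hAI : ∀ a ∈ A, ∀ b ∈ I, a < b) (hI : StrictMonoOn s I) (hkI : k ≤ #I)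
    {x y : ι} (hx : x ∈ A) (hxmax : ∀ a ∈ A, a ≤ x) (hy : y ∈ I) (hymin : ∀ b ∈ I, y ≤ b) :
    ∃ B, IsBlock (A ∪ I) B ∧ x ∈ B ∧ y ∈ B ∧ k ≤ #B ∧ StrictMonotonicOn s B := by
  have hxy : x < y := hAI x hx y hy
  rcases (hs.ne hxy.ne).lt_or_gt with hrise | hfall
  · refine ⟨insert x I, ⟨by grind, ?_⟩, by simp, by simp [hy],
      hkI.trans (card_le_card (subset_insert x I)), Or.inl ?_⟩
    · intro u hu v _ z hz huz _
      grind
    · rw [coe_insert, strictMonoOn_insert_iff_of_forall_ge fun b hb => (hAI x hx b hb).le]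
      exact ⟨fun b hb _ => hrise.trans_le (hI.monotoneOn hy hb (hymin b hb)), hI⟩
  · obtain ⟨E, hEA, hE, hkE, hEanti⟩ := hA.exists_suffix ⟨x, hx⟩
    obtain ⟨e, he⟩ : E.Nonempty := card_pos.1 (hk.trans_le hkE)
    have hxE : x ∈ E := hE e he x hx (hxmax e (hEA he))
    refine ⟨insert y E, ⟨by grind, ?_⟩, by simp [hxE], by simp,
      hkE.trans (card_le_card (subset_insert y E)), Or.inr ?_⟩
    · intro u hu v hv z hz huz hzv
      grind
    · rw [coe_insert, strictAntiOn_insert_iff_of_forall_le fun a ha => (hAI a (hEA ha) y hy).le]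
      exact ⟨fun a ha _ => hfall.trans_le (hEanti.antitoneOn ha hxE (hxmax a (hEA ha))), hEanti⟩

lemma EndsFalling.union (hs : Injective s) (hk : 0 < k) (hA : EndsFalling k s A)
    (hAI : ∀ a ∈ A, ∀ b ∈ I, a < b) (hI : StrictMonoOn s I) (hkI : k ≤ #I) :
    EndsFalling k (toDual ∘ s) (A ∪ I) := by
  refine ⟨coveredByBlocks_toDual_comp_iff.2 fun x hx y hy hxy hcons => ?_, fun _ =>
    ⟨I, subset_union_right, fun e he z hz hez => ?_, hkI, hI⟩⟩
  · rcases mem_union.1 hx with hxA | hxI <;> rcases mem_union.1 hy with hyA | hyI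
    · obtain ⟨B, hB, h⟩ := hA.covered x hxA y hyA hxy fun z hz => hcons z (mem_union_left I hz)
      exact ⟨B, hB.union_of_forall_lt hAI, h⟩
    · refine hA.exists_block_of_junction hs hk hAI hI hkI hxA (fun a ha => ?_) hyI (fun b hb => ?_)
      · by_contra! hxa
        exact (hcons a (mem_union_left I ha) hxa).not_gt (hAI a ha y hyI)
      · exact hcons b (mem_union_right A hb) (hAI x hxA b hb)
    · exact absurd (hAI y hyA x hxI) hxy.not_gt
    · exact ⟨I, isBlock_union_of_forall_lt hAI, hxI, hyI, hkI, Or.inl hI⟩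
  · exact (mem_union.1 hz).resolve_left fun hz => (hAI z hz e he).not_ge hez

end Blocks

section ErdosSzekeres

variable {ι α : Type*} [LinearOrder ι] [LinearOrder α] {s : ι → α} {k : ℕ} {V W : Finset ι}

/-- Every strictly increasing subsequence of `s` with indices in `V` has at most `k` terms. -/
def IncreasingBound (s : ι → α) (k : ℕ) (V : Finset ι) : Prop :=
  ∀ I ⊆ V, StrictMonoOn s I → #I ≤ k

/-- The rank of `x` is the length of a longest increasing subsequence lying strictly below `x` both
in position and in value. -/
lemma IncreasingBound.exists_rank (h : IncreasingBound s k V) :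
    ∃ r : ι → ℕ, (∀ x ∈ V, r x < k) ∧ ∀ x ∈ V, ∀ y, x < y → s x < s y → r x < r y := by
  classical
  let below (x : ι) : Finset (Finset ι) :=
    {I ∈ V.powerset | StrictMonoOn s I ∧ ∀ i ∈ I, i < x ∧ s i < s x}
  have mem_below {x : ι} {I : Finset ι} :
      I ∈ below x ↔ I ⊆ V ∧ StrictMonoOn s I ∧ ∀ i ∈ I, i < x ∧ s i < s x := by
    simp [below]
  have exists_longest (x : ι) : ∃ I ∈ below x, (below x).sup card = #I :=
    exists_mem_eq_sup (below x) ⟨∅, by simp [mem_below, StrictMonoOn]⟩ card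
  have insert_strictMonoOn {x : ι} {I : Finset ι} (hI : I ∈ below x) :
      StrictMonoOn s (insert x I : Finset ι) := by
    obtain ⟨-, hmono, hlt⟩ := mem_below.1 hI
    rw [coe_insert, strictMonoOn_insert_iff_of_forall_le fun i hi => (hlt i hi).1.le]
    exact ⟨fun i hi _ => (hlt i hi).2, hmono⟩
  have card_insert_below {x : ι} {I : Finset ι} (hI : I ∈ below x) : #(insert x I) = #I + 1 :=
    card_insert_of_notMem fun hx => ((mem_below.1 hI).2.2 x hx).1.false
  refine ⟨fun x => (below x).sup card, fun x hx => ?_, fun x hx y hxy hsxy => ?_⟩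
  · obtain ⟨I, hI, hcard⟩ := exists_longest x
    have hle := h _ (insert_subset hx (mem_below.1 hI).1) (insert_strictMonoOn hI)
    rw [card_insert_below hI] at hle
    exact hcard.trans_lt hle
  · obtain ⟨I, hI, hcard⟩ := exists_longest x
    obtain ⟨hIV, -, hlt⟩ := mem_below.1 hI
    have hmem : insert x I ∈ below y := by
      refine mem_below.2 ⟨insert_subset hx hIV, insert_strictMonoOn hI, ?_⟩
      simp only [forall_mem_insert]
      exact ⟨⟨hxy, hsxy⟩, fun i hi => ⟨(hlt i hi).1.trans hxy, (hlt i hi).2.trans hsxy⟩⟩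
    calc (below x).sup card = #I := hcard
      _ < #(insert x I) := by rw [card_insert_below hI]; exact Nat.lt_succ_self _
      _ ≤ (below y).sup card := le_sup (f := card) hmem

lemma IncreasingBound.exists_antitoneOn (h : IncreasingBound s k V) :
    ∃ D ⊆ V, AntitoneOn s D ∧ #V ≤ #D * k := by
  obtain ⟨r, hrk, hr⟩ := h.exists_rank
  rcases V.eq_empty_or_nonempty with rfl | hV
  · exact ⟨∅, Subset.rfl, by simp [AntitoneOn], by simp⟩
  obtain ⟨x, -, hxmax⟩ := exists_max_image V (fun x => #{y ∈ V | r y = r x}) hV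
  refine ⟨{y ∈ V | r y = r x}, filter_subset _ _, fun y hy z hz hyz => ?_, ?_⟩
  · simp only [coe_filter, Set.mem_ofPred_eq] at hy hz
    by_contra! hlt
    have hne : y ≠ z := fun hyz => hlt.ne (congrArg s hyz)
    have := hr y hy.1 z (hyz.lt_of_ne hne) hlt
    omega
  · have himage : #(V.image r) ≤ k := by
      simpa using card_le_card (image_subset_iff.2 fun y hy => mem_range.2 (hrk y hy))
    refine (card_le_mul_card_image V _ fun c hc => ?_).trans (Nat.mul_le_mul_left _ himage)
    obtain ⟨y, hy, rfl⟩ := mem_image.1 hc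
    exact hxmax y hy

lemma IncreasingBound.exists_strictAntiOn (hs : Injective s) (h : IncreasingBound s k V) :
    ∃ D ⊆ V, StrictAntiOn s D ∧ #V ≤ #D * k := by
  obtain ⟨D, hDV, hD, hcard⟩ := h.exists_antitoneOn
  exact ⟨D, hDV, hD.strictAntiOn_of_injOn hs.injOn, hcard⟩

lemma IncreasingBound.exists_long_strictAntiOn (hs : Injective s) (h : IncreasingBound s k V)
    (hVW : V ⊆ W) (hdec : ¬ IncreasingBound (toDual ∘ s) k W) :
    ∃ D ⊆ W, StrictAntiOn s D ∧ k < #D ∧ #V ≤ #D * k := by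
  obtain ⟨D₁, hD₁W, hD₁, hkD₁⟩ : ∃ D ⊆ W, StrictAntiOn s D ∧ k < #D := by
    simpa [IncreasingBound] using hdec
  obtain ⟨D₂, hD₂V, hD₂, hVD₂⟩ := h.exists_strictAntiOn hs
  rcases le_total (#D₁) (#D₂) with hle | hle
  · exact ⟨D₂, hD₂V.trans hVW, hD₂, hkD₁.trans_le hle, hVD₂⟩
  · exact ⟨D₁, hD₁W, hD₁, hkD₁, hVD₂.trans (Nat.mul_le_mul_right k hle)⟩

end ErdosSzekeres

section Greedy

variable {ι α : Type*} [LinearOrder ι] [LinearOrder α] {s : ι → α} {k : ℕ} {P V W : Finset ι}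

/-- The state of the greedy construction: within `W` there are two covered subsequences, one ending
with a falling and the other with a rising block of length at least `k + 1`, whose lengths add up
to at least `#W / k`. -/
def HasRollercoasterPair (s : ι → α) (k : ℕ) (W : Finset ι) : Prop :=
  ∃ A ⊆ W, ∃ B ⊆ W, EndsFalling (k + 1) s A ∧ EndsFalling (k + 1) (toDual ∘ s) B ∧
    #W ≤ (#A + #B) * k

lemma hasRollercoasterPair_toDual_comp_iff :
    HasRollercoasterPair (toDual ∘ s) k W ↔ HasRollercoasterPair s k W := by
  constructor <;>
  · rintro ⟨A, hA, B, hB, hfall, hrise, hP⟩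
    exact ⟨B, hB, A, hA, hrise, hfall, by rwa [add_comm #B]⟩

lemma HasRollercoasterPair.absorb_window (hs : Injective s) (hk : 0 < k)
    (h : HasRollercoasterPair s k P) {x : ι} (hPV : ∀ p ∈ P, ∀ v ∈ insert x V, p < v)
    (hV : IncreasingBound s k V) (hinc : ¬ IncreasingBound s k (insert x V))
    (hdec : ¬ IncreasingBound (toDual ∘ s) k (insert x V)) :
    HasRollercoasterPair s k (P ∪ insert x V) := by
  obtain ⟨A, hAP, B, hBP, hfall, hrise, hP⟩ := h
  obtain ⟨I, hIV, hI, hkI⟩ : ∃ I ⊆ insert x V, StrictMonoOn s I ∧ k < #I := by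
    simpa [IncreasingBound] using hinc
  obtain ⟨D, hDV, hD, hkD, hVD⟩ := hV.exists_long_strictAntiOn hs (subset_insert x V) hdec
  have hBD : ∀ b ∈ B, ∀ d ∈ D, b < d := fun b hb d hd => hPV b (hBP hb) d (hDV hd)
  have hAI : ∀ a ∈ A, ∀ i ∈ I, a < i := fun a ha i hi => hPV a (hAP ha) i (hIV hi)
  refine ⟨B ∪ D, union_subset_union hBP hDV, A ∪ I, union_subset_union hAP hIV,
    hrise.union (toDual.injective.comp hs) k.succ_pos hBD hD hkD,
    hfall.union hs k.succ_pos hAI hI hkI, ?_⟩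
  calc #(P ∪ insert x V) ≤ #P + (#V + 1) :=
        (card_union_le _ _).trans (Nat.add_le_add_left (card_insert_le x V) _)
    _ ≤ (#A + #B) * k + (#D * k + #I * k) := by
        gcongr
        exact Nat.mul_pos (by omega) hk
    _ = (#(B ∪ D) + #(A ∪ I)) * k := by
        rw [card_union_of_forall_lt hBD, card_union_of_forall_lt hAI]
        ring

/-- `P` is the part already processed. The window `V` grows until it contains both an increasing and
a decreasing subsequence of length `k + 1`, and is then absorbed into `P`. -/
lemma exists_hasRollercoasterPair_window (hs : Injective s) (hk : 0 < k) (W : Finset ι) :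
    ∃ P V, P ∪ V = W ∧ (∀ p ∈ P, ∀ v ∈ V, p < v) ∧ HasRollercoasterPair s k P ∧
      (IncreasingBound s k V ∨ IncreasingBound (toDual ∘ s) k V) := by
  induction W using Finset.induction_on_max with
  | empty =>
    exact ⟨∅, ∅, by simp, by simp,
      ⟨∅, Subset.rfl, ∅, Subset.rfl, endsFalling_empty, endsFalling_empty, by simp⟩,
      Or.inl fun I hI _ => by simp [subset_empty.1 hI]⟩
  | insert x W hx ih =>
    obtain ⟨P, V, rfl, hPV, hpair, hV⟩ := ih
    have hPV' : ∀ p ∈ P, ∀ v ∈ insert x V, p < v := fun p hp =>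
      (forall_mem_insert _ _ _).2 ⟨hx p (mem_union_left V hp), hPV p hp⟩
    by_cases hbound : IncreasingBound s k (insert x V) ∨
        IncreasingBound (toDual ∘ s) k (insert x V)
    · exact ⟨P, insert x V, union_insert x P V, hPV', hpair, hbound⟩
    obtain ⟨hinc, hdec⟩ := not_or.1 hbound
    refine ⟨P ∪ insert x V, ∅, by simp, by simp, ?_,
      Or.inl fun I hI _ => by simp [subset_empty.1 hI]⟩
    rcases hV with hV | hV
    · exact hpair.absorb_window hs hk hPV' hV hinc hdec
    · exact hasRollercoasterPair_toDual_comp_iff.1 <|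
        (hasRollercoasterPair_toDual_comp_iff.2 hpair).absorb_window (toDual.injective.comp hs) hk
          hPV' hV hdec hinc

lemma exists_coveredByBlocks_of_le_add {l N : ℕ} {A B : Finset ι} (hA : CoveredByBlocks k s A)
    (hB : CoveredByBlocks k s B) (hkA : A.Nonempty → k ≤ #A) (hkB : B.Nonempty → k ≤ #B)
    (hN : 0 < N) (hle : N ≤ (#A + #B) * l) :
    ∃ C, k ≤ #C ∧ CoveredByBlocks k s C ∧ N ≤ 2 * #C * l := by
  have hpos : 0 < #A + #B := Nat.pos_of_mul_pos_right (hN.trans_le hle)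
  rcases le_total (#B) (#A) with hBA | hAB
  · exact ⟨A, hkA (card_pos.1 (by omega)), hA, hle.trans (Nat.mul_le_mul_right l (by omega))⟩
  · exact ⟨B, hkB (card_pos.1 (by omega)), hB, hle.trans (Nat.mul_le_mul_right l (by omega))⟩

/-- A decreasing subsequence of the leftover window `V` is appended to `B` if it is long enough to
form a block; otherwise `V` has at most `k ^ 2` terms and is dropped. -/
lemma HasRollercoasterPair.exists_coveredByBlocks (hs : Injective s)
    (h : HasRollercoasterPair s k P) (hPV : ∀ p ∈ P, ∀ v ∈ V, p < v)
    (hV : IncreasingBound s k V) (hcard : k ^ 2 < #(P ∪ V)) :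
    ∃ C, k + 1 ≤ #C ∧ CoveredByBlocks (k + 1) s C ∧ #(P ∪ V) ≤ 2 * #C * k + k ^ 2 := by
  simp only [← Nat.sub_le_iff_le_add]
  obtain ⟨A, -, B, hBP, hfall, hrise, hP⟩ := h
  obtain ⟨D, hDV, hD, hVD⟩ := hV.exists_strictAntiOn hs
  have hle : #(P ∪ V) ≤ (#A + #B) * k + #D * k :=
    (card_union_le P V).trans (Nat.add_le_add hP hVD)
  rcases Nat.lt_or_ge k (#D) with hkD | hkD
  · have hBD : ∀ b ∈ B, ∀ d ∈ D, b < d := fun b hb d hd => hPV b (hBP hb) d (hDV hd)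
    have hfall' : EndsFalling (k + 1) s (B ∪ D) :=
      hrise.union (toDual.injective.comp hs) k.succ_pos hBD hD hkD
    refine exists_coveredByBlocks_of_le_add hfall.covered hfall'.covered hfall.le_card
      hfall'.le_card (Nat.sub_pos_of_lt hcard) ?_
    calc #(P ∪ V) - k ^ 2 ≤ (#A + #B) * k + #D * k := (Nat.sub_le _ _).trans hle
      _ = (#A + #(B ∪ D)) * k := by rw [card_union_of_forall_lt hBD]; ring
  · refine exists_coveredByBlocks_of_le_add hfall.covered
      (coveredByBlocks_toDual_comp_iff.1 hrise.covered) hfall.le_card hrise.le_card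
      (Nat.sub_pos_of_lt hcard) (Nat.sub_le_iff_le_add.2 ?_)
    calc #(P ∪ V) ≤ (#A + #B) * k + #D * k := hle
      _ ≤ (#A + #B) * k + k ^ 2 := by rw [sq]; gcongr

theorem exists_coveredByBlocks (hs : Injective s) (hk : 0 < k) (hW : k ^ 2 < #W) :
    ∃ C, k + 1 ≤ #C ∧ CoveredByBlocks (k + 1) s C ∧ #W ≤ 2 * #C * k + k ^ 2 := by
  obtain ⟨P, V, rfl, hPV, hpair, hV | hV⟩ := exists_hasRollercoasterPair_window hs hk W
  · exact hpair.exists_coveredByBlocks hs hPV hV hW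
  · simpa only [coveredByBlocks_toDual_comp_iff] using
      (hasRollercoasterPair_toDual_comp_iff.2 hpair).exists_coveredByBlocks
        (toDual.injective.comp hs) hPV hV hW

end Greedy

section Runs

variable {ι κ α : Type*} [LinearOrder ι] [LinearOrder κ] [LinearOrder α]

lemma ordConnected_union_of_mem {B C : Set ι} {c : ι} (hB : B.OrdConnected) (hC : C.OrdConnected)
    (hcB : c ∈ B) (hcC : c ∈ C) : (B ∪ C).OrdConnected := by
  refine ⟨fun u hu v hv z ⟨huz, hzv⟩ => ?_⟩
  rcases le_total z c with hzc | hcz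
  · exact hu.imp (fun hu => hB.out hu hcB ⟨huz, hzc⟩) fun hu => hC.out hu hcC ⟨huz, hzc⟩
  · exact hv.imp (fun hv => hB.out hcB hv ⟨hcz, hzv⟩) fun hv => hC.out hcC hv ⟨hcz, hzv⟩

lemma strictMonoOn_union_of_ordConnected {s : ι → α} {B C : Set ι} {c : ι} (hsB : StrictMonoOn s B)
    (hsC : StrictMonoOn s C) (hB : B.OrdConnected) (hC : C.OrdConnected) (hcB : c ∈ B)
    (hcC : c ∈ C) : StrictMonoOn s (B ∪ C) := by
  intro u hu v hv huv
  rcases le_or_gt v c with hvc | hcv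
  · exact hu.elim (fun hu => hsB hu (hB.out hu hcB ⟨huv.le, hvc⟩) huv)
      fun hu => hsC hu (hC.out hu hcC ⟨huv.le, hvc⟩) huv
  rcases le_or_gt c u with hcu | huc
  · exact hv.elim (fun hv => hsB (hB.out hcB hv ⟨hcu, huv.le⟩) hv huv)
      fun hv => hsC (hC.out hcC hv ⟨hcu, huv.le⟩) hv huv
  calc s u < s c := hu.elim (fun hu => hsB hu hcB huc) fun hu => hsC hu hcC huc
    _ < s v := hv.elim (fun hv => hsB hcB hv hcv) fun hv => hsC hcC hv hcv

lemma StrictMonotonicOn.union {s : ι → α} {B C : Set ι} {x y : ι} (hsB : StrictMonotonicOn s B)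
    (hsC : StrictMonotonicOn s C) (hB : B.OrdConnected) (hC : C.OrdConnected)
    (hx : x ∈ B ∩ C) (hy : y ∈ B ∩ C) (hxy : x < y) : StrictMonotonicOn s (B ∪ C) := by
  rcases hsB with hsB | hsB <;> rcases hsC with hsC | hsC
  · exact Or.inl (strictMonoOn_union_of_ordConnected hsB hsC hB hC hx.1 hx.2)
  · exact absurd (hsB hx.1 hy.1 hxy) (hsC hx.2 hy.2 hxy).not_gt
  · exact absurd (hsB hx.1 hy.1 hxy) (hsC hx.2 hy.2 hxy).not_gt
  · exact Or.inr (strictMonoOn_union_of_ordConnected (s := toDual ∘ s) hsB hsC hB hC hx.1 hx.2)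

lemma CoveredByBlocks.comp_orderEmbedding {k : ℕ} {s : ι → α} {A : Finset κ} {f : κ ↪o ι}
    (h : CoveredByBlocks k s (A.map f.toEmbedding)) : CoveredByBlocks k (s ∘ f) A := by
  intro x hx y hy hxy hcons
  obtain ⟨B, ⟨hBA, hB⟩, hxB, hyB, hkB, hmono⟩ := h (f x) (mem_map_of_mem _ hx) (f y)
    (mem_map_of_mem _ hy) (f.strictMono hxy) (by simpa using hcons)
  obtain ⟨C, hCA, rfl⟩ := subset_map_iff.1 hBA
  refine ⟨C, ⟨hCA, by simpa using hB⟩, by simpa using hxB, by simpa using hyB,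
    by simpa using hkB, ?_⟩
  have hmaps : Set.MapsTo f C (C.map f.toEmbedding) := fun z hz => mem_map_of_mem _ hz
  exact hmono.imp (fun h : StrictMonoOn s _ => h.comp (f.strictMono.strictMonoOn _) hmaps)
    fun h : StrictAntiOn s _ => h.comp_strictMonoOn (f.strictMono.strictMonoOn _) hmaps

lemma IsBlock.ordConnected_of_univ [Fintype ι] {B : Finset ι} (h : IsBlock univ B) :
    (B : Set ι).OrdConnected :=
  ⟨fun u hu v hv z hz => h.2 u hu v hv z (mem_univ z) hz.1 hz.2⟩

lemma CoveredByBlocks.exists_block_of_covBy [Fintype ι] {k : ℕ} {s : ι → α}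
    (h : CoveredByBlocks k s univ) {x y : ι} (hxy : x ⋖ y) :
    ∃ B : Finset ι, (B : Set ι).OrdConnected ∧ x ∈ B ∧ y ∈ B ∧ k ≤ #B ∧ StrictMonotonicOn s B := by
  obtain ⟨B, hB, h⟩ := h x (mem_univ x) y (mem_univ y) hxy.lt fun z _ => hxy.ge_of_gt
  exact ⟨B, hB.ordConnected_of_univ, h⟩

lemma strictMonotonicOn_Icc_of_covBy {s : ι → α} {x y : ι} (hs : Injective s) (hxy : x ⋖ y) :
    StrictMonotonicOn s (Set.Icc x y) := by
  rw [hxy.Icc_eq]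
  rcases (hs.ne hxy.lt.ne).lt_or_gt with h | h
  · exact Or.inl (by simp [strictMonoOn_insert_iff, h, hxy.lt.not_gt])
  · exact Or.inr (by simp [strictAntiOn_insert_iff, h, hxy.lt.not_gt])

variable {m : ℕ} {t : Fin m → ℝ} {i j : Fin m}

lemma IsRun.subset_Icc (h : IsRun t i j) {C : Set (Fin m)} (hC : C.OrdConnected)
    (hsub : Set.Icc i j ⊆ C) (hmono : StrictMonotonicOn t C) : C ⊆ Set.Icc i j := by
  obtain ⟨hij, -, hmax⟩ := h
  have hi : i ∈ C := hsub ⟨le_rfl, hij⟩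
  have hj : j ∈ C := hsub ⟨hij, le_rfl⟩
  refine fun z hz => ⟨?_, ?_⟩
  · by_contra! hzi
    have hzj : Set.Icc z j ⊆ C := hC.out hz hj
    exact hmax z j hzi.le le_rfl (Or.inl hzi.ne')
      (hmono.imp (fun h => h.mono hzj) fun h => h.mono hzj)
  · by_contra! hjz
    have hiz : Set.Icc i z ⊆ C := hC.out hi hz
    exact hmax i z le_rfl hjz.le (Or.inr hjz.ne)
      (hmono.imp (fun h => h.mono hiz) fun h => h.mono hiz)

lemma IsRun.lt (h : IsRun t i j) (hm : 2 ≤ m) (ht : Injective t) : i < j := by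
  refine h.1.lt_of_ne ?_
  rintro rfl
  have : Nontrivial (Fin m) := Fin.nontrivial_iff_two_le.2 hm
  obtain ⟨x, y, hxy, hi⟩ : ∃ x y, x ⋖ y ∧ i ∈ Set.Icc x y := by
    obtain ⟨z, hz⟩ := exists_ne i
    rcases hz.lt_or_gt with hzi | hiz
    · obtain ⟨x, -, hxi⟩ := exists_le_covBy_of_lt hzi
      exact ⟨x, i, hxi, hxi.le, le_rfl⟩
    · obtain ⟨y, hiy, -⟩ := exists_covBy_le_of_lt hiz
      exact ⟨i, y, hiy, le_rfl, hiy.le⟩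
  have hsub : Set.Icc x y ⊆ Set.Icc i i := h.subset_Icc Set.ordConnected_Icc (by simpa using hi)
    (strictMonotonicOn_Icc_of_covBy ht hxy)
  rw [Set.Icc_self] at hsub
  exact hxy.lt.ne ((hsub ⟨le_rfl, hxy.le⟩).trans (hsub ⟨hxy.le, le_rfl⟩).symm)

lemma CoveredByBlocks.isKRollercoaster {k : ℕ} (h : CoveredByBlocks k t univ) (hk : 2 ≤ k)
    (hm : k ≤ m) (ht : Injective t) : IsKRollercoaster k t := by
  refine ⟨hm, ht, fun i j hrun => ?_⟩
  have hij : i < j := hrun.lt (hk.trans hm) ht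
  obtain ⟨y, hiy, hyj⟩ := exists_covBy_le_of_lt hij
  obtain ⟨B, hB, hiB, hyB, hkB, hmono⟩ := h.exists_block_of_covBy hiy
  have hi : i ∈ Set.Icc i j := ⟨le_rfl, hij.le⟩
  have hunion : StrictMonotonicOn t (B ∪ Set.Icc i j) :=
    hmono.union hrun.2.1 hB Set.ordConnected_Icc ⟨hiB, hi⟩ ⟨hyB, hiy.le, hyj⟩ hiy.lt
  have hBij : (B : Set (Fin m)) ⊆ Set.Icc i j := Set.subset_union_left.trans <|
    hrun.subset_Icc (ordConnected_union_of_mem hB Set.ordConnected_Icc hiB hi)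
      Set.subset_union_right hunion
  have hcard : #B ≤ #(Icc i j) := card_le_card (by rwa [← coe_subset, coe_Icc])
  rw [Fin.card_Icc] at hcard
  omega

end Runs

theorem statement7_general (k : ℕ) (hk : 2 ≤ k) (n : ℕ) (hn : (k - 1) ^ 2 + 1 ≤ n)
    (s : Fin n → ℝ) (hs : Function.Injective s) :
    ∃ (m : ℕ) (f : Fin m → Fin n), StrictMono f ∧ IsKRollercoaster k (s ∘ f) ∧
      (n : ℝ) / (2 * ((k : ℝ) - 1)) - ((k : ℝ) - 1) / 2 ≤ (m : ℝ) := by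
  obtain ⟨l, rfl⟩ : ∃ l, k = l + 1 := ⟨k - 1, by omega⟩
  rw [Nat.add_sub_cancel] at hn
  obtain ⟨A, hlA, hA, hcard⟩ := exists_coveredByBlocks hs (k := l) (W := univ) (by omega)
    (by rwa [card_fin])
  have hcomp : CoveredByBlocks (l + 1) (s ∘ A.orderEmbOfFin rfl) univ :=
    CoveredByBlocks.comp_orderEmbedding (by rwa [map_orderEmbOfFin_univ])
  refine ⟨#A, A.orderEmbOfFin rfl, (A.orderEmbOfFin rfl).strictMono,
    hcomp.isKRollercoaster hk hlA (hs.comp (A.orderEmbOfFin rfl).injective), ?_⟩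
  have hl : (0 : ℝ) < l := by exact_mod_cast (by omega : 0 < l)
  have hbound : (n : ℝ) ≤ 2 * #A * l + l ^ 2 := by
    rw [card_fin] at hcard
    exact_mod_cast hcard
  push_cast
  rw [add_sub_cancel_right, sub_le_iff_le_add, div_le_iff₀ (by positivity)]
  linarith

/-- For every integer `k ≥ 4`, every sequence of `n ≥ (k-1)² + 1` distinct
real numbers contains a `k`-rollercoaster subsequence of length at least
`n/(2(k-1)) − 3k/2`. -/
theorem statement7 (k : ℕ) (hk : 4 ≤ k) (n : ℕ) (hn : (k - 1) ^ 2 + 1 ≤ n)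
    (s : Fin n → ℝ) (hs : Function.Injective s) :
    ∃ (m : ℕ) (f : Fin m → Fin n), StrictMono f ∧ IsKRollercoaster k (s ∘ f) ∧
      (n : ℝ) / (2 * ((k : ℝ) - 1)) - 3 * (k : ℝ) / 2 ≤ (m : ℝ) := by
  obtain ⟨m, f, hf, hroller, hbound⟩ := statement7_general k (by omega) n hn s hs
  exact ⟨m, f, hf, hroller, by linarith [(Nat.cast_nonneg k : (0 : ℝ) ≤ k)]⟩
end

section
/- Every sequence of n ≥ 1 distinct real numbers contains two subsequences R₁ and R₂, each a pseudo-rollercoaster, such that both R₁ and R₂ contain the first element of the sequence, every index except possibly the last index belongs to the index set of at least one of R₁, R₂, and consequently the lengths of R₁ and R₂ sum to at least n. -/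
/-- A *pseudo-rollercoaster* is a finite sequence of distinct real numbers in
which every run, except possibly the first run, has length at least 3. -/
def IsPseudoRollercoaster {m : ℕ} (t : Fin m → ℝ) : Prop :=
  Function.Injective t ∧
  ∀ i j : Fin m, IsRun t i j → (i : ℕ) ≠ 0 → (i : ℕ) + 2 ≤ (j : ℕ)

/-!
A coaster is a subsequence, starting at the first term, that grows either by one term prolonging
its last run or by two terms opening a new run in the other direction; it is therefore a
pseudo-rollercoaster. Two coasters covering the sequence are built by reading it from left to right.

As long as one coaster ends upwards and the other downwards, the next term `x` prolongs one of them
unless it lies above the end of the downward coaster and below the end of the upward one. In that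
case the term after `x` moves away from `x`, say upwards, and together with `x` turns the downward
coaster. From then on both coasters end upwards, one of them in a term `p` and the other in a later
and lower term `u`. The following terms are appended to both coasters as long as they are records,
that is, above `p` and all terms since. When a term `z` arrives that is not a record, one coaster
gives the records up again:

* if `z` is above `u`, the coaster ending in `p` keeps the records, and the one ending in `u`
  continues with `z` in their place;
* if `z` is below `u`, the coaster ending in `u` keeps the records, and the one ending in `p` turns
  downwards through `u` and `z`, which restores the initial situation.
-/

open Function

section Runs

variable {α β : Type*}

/-- The steps from `i` to `j` and from `j` to `k` go in the same direction with respect to `r`. -/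
def Straight (r : α → α → Prop) (i j k : α) : Prop :=
  (r i j ∧ r j k) ∨ (r j i ∧ r k j)

theorem Straight.of_swap {r : α → α → Prop} {i j k : α} (h : Straight (swap r) i j k) :
    Straight r i j k :=
  Or.symm h

theorem strictMonoOn_Icc_of_covBy [PartialOrder α] [Preorder β] {t : α → β} {i j : α}
    (hij : i ⋖ j) (h : t i < t j) : StrictMonoOn t (Set.Icc i j) := by
  simpa [hij.Icc_eq, StrictMonoOn, hij.lt.not_gt] using fun _ => h

theorem strictMonoOn_or_strictAntiOn_of_covBy [PartialOrder α] [LinearOrder β] {t : α → β}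
    (ht : Injective t) {i j : α} (hij : i ⋖ j) :
    StrictMonoOn t (Set.Icc i j) ∨ StrictAntiOn t (Set.Icc i j) :=
  (ht.ne hij.ne).lt_or_gt.imp (strictMonoOn_Icc_of_covBy hij)
    (strictMonoOn_Icc_of_covBy (β := βᵒᵈ) hij)

theorem strictMonoOn_Icc_of_covBy_of_covBy [LinearOrder α] [Preorder β] {t : α → β}
    {i j k : α} (hij : i ⋖ j) (hjk : j ⋖ k) (h₁ : t i < t j) (h₂ : t j < t k) :
    StrictMonoOn t (Set.Icc i k) := by
  rw [← Set.Icc_union_Icc_eq_Icc hij.le hjk.le]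
  exact (strictMonoOn_Icc_of_covBy hij h₁).union (strictMonoOn_Icc_of_covBy hjk h₂)
    (isGreatest_Icc hij.le) (isLeast_Icc hjk.le)

theorem Straight.strictMonoOn_or_strictAntiOn [LinearOrder α] [Preorder β] {t : α → β}
    {i j k : α} (h : Straight ((· < ·) on t) i j k) (hij : i ⋖ j) (hjk : j ⋖ k) :
    StrictMonoOn t (Set.Icc i k) ∨ StrictAntiOn t (Set.Icc i k) :=
  h.imp (fun h => strictMonoOn_Icc_of_covBy_of_covBy hij hjk h.1 h.2)
    fun h => strictMonoOn_Icc_of_covBy_of_covBy (β := βᵒᵈ) hij hjk h.1 h.2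

variable {m : ℕ} {t : Fin m → ℝ}

theorem IsRun.not_monotone_of_lt_left {i j p : Fin m} (h : IsRun t i j) (hp : p < i) :
    ¬ (StrictMonoOn t (Set.Icc p j) ∨ StrictAntiOn t (Set.Icc p j)) :=
  h.2.2 p j hp.le le_rfl (Or.inl hp.ne')

theorem IsRun.not_monotone_of_lt_right {i j q : Fin m} (h : IsRun t i j) (hq : j < q) :
    ¬ (StrictMonoOn t (Set.Icc i q) ∨ StrictAntiOn t (Set.Icc i q)) :=
  h.2.2 i q le_rfl hq.le (Or.inr hq.ne)

theorem isPseudoRollercoaster_of_straight (ht : Injective t)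
    (h : ∀ i j k : Fin m, i ⋖ j → j ⋖ k → Straight ((· < ·) on t) i j k ∨
      ∃ l, k ⋖ l ∧ Straight ((· < ·) on t) j k l) :
    IsPseudoRollercoaster t := by
  refine ⟨ht, fun i j hrun hi => ?_⟩
  by_contra! hshort
  obtain ⟨p, hpi⟩ : ∃ p : Fin m, p ⋖ i := ⟨⟨i - 1, by omega⟩, by
    simp only [Fin.covBy_iff, Nat.covBy_iff_add_one_eq]
    omega⟩
  rcases hrun.1.eq_or_lt with rfl | hlt
  · exact hrun.not_monotone_of_lt_left hpi.lt (strictMonoOn_or_strictAntiOn_of_covBy ht hpi)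
  · have hij : i ⋖ j := by
      simp only [Fin.covBy_iff, Nat.covBy_iff_add_one_eq]
      omega
    rcases h p i j hpi hij with hmono | ⟨l, hjl, hmono⟩
    · exact hrun.not_monotone_of_lt_left hpi.lt (hmono.strictMonoOn_or_strictAntiOn hpi hij)
    · exact hrun.not_monotone_of_lt_right hjl.lt (hmono.strictMonoOn_or_strictAntiOn hij hjl)

end Runs

theorem cons_suffix_iff_reverse_get {α : Type*} {a : α} {l' l : List α} :
    a :: l' <:+ l ↔
      l' <:+ l ∧ ∃ h : l'.length < l.reverse.length, l.reverse.get ⟨l'.length, h⟩ = a := by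
  constructor
  · rintro ⟨l'', rfl⟩
    exact ⟨⟨l'' ++ [a], by simp⟩, by simp, by simp⟩
  · rintro ⟨⟨l'', rfl⟩, h, rfl⟩
    obtain rfl | ⟨l''', b, rfl⟩ := List.eq_nil_or_concat l''
    · simp at h
    · exact ⟨l''', by simp⟩

/-- `Coaster r l` says that the list `l`, with its latest term at the head, starts at `⊥` and is
built by prolonging the last run or by opening a new run with two terms at once, the last run
having the direction `r`. Directions are relations so that the reverse of `r` is `swap r`. -/
inductive Coaster {ι : Type*} [LT ι] [Bot ι] : (ι → ι → Prop) → List ι → Prop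
  | start (r : ι → ι → Prop) : Coaster r [⊥]
  | extend {r : ι → ι → Prop} {i j : ι} {l : List ι} (h : Coaster r (i :: l)) (hij : i < j)
      (hr : r i j) : Coaster r (j :: i :: l)
  | turn {r : ι → ι → Prop} {i j k : ι} {l : List ι} (h : Coaster (swap r) (i :: l))
      (hij : i < j) (hjk : j < k) (hr : r i j) (hr' : r j k) : Coaster r (k :: j :: i :: l)

namespace Coaster

variable {ι : Type*} {r : ι → ι → Prop} {l : List ι}

theorem bot_mem [LT ι] [Bot ι] (h : Coaster r l) : ⊥ ∈ l := by
  induction h with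
  | start => exact List.mem_singleton_self _
  | extend _ _ _ ih => exact List.mem_cons_of_mem _ ih
  | turn _ _ _ _ _ ih => exact List.mem_cons_of_mem _ (List.mem_cons_of_mem _ ih)

theorem sortedGT [Preorder ι] [Bot ι] (h : Coaster r l) : l.SortedGT := by
  refine List.IsChain.sortedGT ?_
  induction h with
  | start => exact List.isChain_singleton _
  | extend _ hij _ ih => exact .cons_cons hij ih
  | turn _ hij hjk _ _ ih => exact .cons_cons hjk (.cons_cons hij ih)

theorem rel_head [LT ι] [Bot ι] {i j : ι} (h : Coaster r (j :: i :: l)) : r i j := by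
  cases h <;> assumption

theorem straight_of_suffix [LT ι] [Bot ι] (h : Coaster r l) {i j k : ι} {l' : List ι}
    (hl : k :: j :: i :: l' <:+ l) :
    Straight r i j k ∨ ∃ m, m :: k :: j :: i :: l' <:+ l ∧ Straight r j k m := by
  -- Only a triple ending with the first of the two terms of a turn can fail to be straight, and
  -- then the second of these terms makes the next triple straight.
  induction h with
  | start => simpa using hl.length_le
  | @extend r a b l h _ hab ih =>
    rcases List.suffix_cons_iff.1 hl with heq | hl
    · obtain ⟨rfl, rfl, rfl⟩ : k = b ∧ j = a ∧ i :: l' = l := by simpa using heq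
      exact Or.inl (Or.inl ⟨h.rel_head, hab⟩)
    · exact (ih hl).imp_right fun ⟨m, hm, hs⟩ => ⟨m, hm.trans (List.suffix_cons b _), hs⟩
  | @turn r a b c l h _ _ hab hbc ih =>
    rcases List.suffix_cons_iff.1 hl with heq | hl
    · obtain ⟨rfl, rfl, rfl, rfl⟩ : k = c ∧ j = b ∧ i = a ∧ l' = l := by simpa using heq
      exact Or.inl (Or.inl ⟨hab, hbc⟩)
    rcases List.suffix_cons_iff.1 hl with heq | hl
    · obtain ⟨rfl, rfl, rfl⟩ : k = b ∧ j = a ∧ i :: l' = l := by simpa using heq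
      exact Or.inr ⟨c, List.suffix_rfl, Or.inl ⟨hab, hbc⟩⟩
    · refine (ih hl).imp Straight.of_swap fun ⟨m, hm, hs⟩ => ⟨m, ?_, hs.of_swap⟩
      exact hm.trans ((List.suffix_cons b _).trans (List.suffix_cons c _))

end Coaster

/-- A coaster for the relation `r` whose last run has either of the directions `r` and `swap r`. -/
def IsCoaster {ι : Type*} [LT ι] [Bot ι] (r : ι → ι → Prop) (l : List ι) : Prop :=
  Coaster r l ∨ Coaster (swap r) l

namespace IsCoaster

variable {ι : Type*} {r : ι → ι → Prop} {l : List ι}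

theorem of_swap [LT ι] [Bot ι] (h : IsCoaster (swap r) l) : IsCoaster r l :=
  Or.symm h

theorem bot_mem [LT ι] [Bot ι] (h : IsCoaster r l) : ⊥ ∈ l :=
  h.elim Coaster.bot_mem Coaster.bot_mem

theorem sortedGT [Preorder ι] [Bot ι] (h : IsCoaster r l) : l.SortedGT :=
  h.elim Coaster.sortedGT Coaster.sortedGT

theorem straight_of_suffix [LT ι] [Bot ι] (h : IsCoaster r l) {i j k : ι} {l' : List ι}
    (hl : k :: j :: i :: l' <:+ l) :
    Straight r i j k ∨ ∃ m, m :: k :: j :: i :: l' <:+ l ∧ Straight r j k m := by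
  rcases h with h | h
  · exact h.straight_of_suffix hl
  · exact (h.straight_of_suffix hl).imp Straight.of_swap
      fun ⟨m, hm, hs⟩ => ⟨m, hm, hs.of_swap⟩

theorem straight_reverse_get [LT ι] [Bot ι] (h : IsCoaster r l) {i j k : Fin l.reverse.length}
    (hij : i ⋖ j) (hjk : j ⋖ k) :
    Straight (r on l.reverse.get) i j k ∨
      ∃ m, k ⋖ m ∧ Straight (r on l.reverse.get) j k m := by
  obtain ⟨i, hi⟩ := i
  obtain ⟨j, hj⟩ := j
  obtain ⟨k, hk⟩ := k
  simp only [Fin.covBy_iff, Nat.covBy_iff_add_one_eq] at hij hjk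
  obtain ⟨l', hl', rfl⟩ : ∃ l', l' <:+ l ∧ l'.length = i :=
    ⟨l.drop (l.length - i), List.drop_suffix _ _, by
      rw [List.length_reverse] at hi
      rw [List.length_drop]
      omega⟩
  subst hij hjk
  have hsuffix := cons_suffix_iff_reverse_get.2 ⟨cons_suffix_iff_reverse_get.2
    ⟨cons_suffix_iff_reverse_get.2 ⟨hl', hi, rfl⟩, hj, rfl⟩, hk, rfl⟩
  refine (h.straight_of_suffix hsuffix).imp_right fun ⟨m, hm, hs⟩ => ?_
  obtain ⟨-, hlt, rfl⟩ := cons_suffix_iff_reverse_get.1 hm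
  exact ⟨⟨_, hlt⟩, by simp, hs⟩

theorem isPseudoRollercoaster [Preorder ι] [Bot ι] {s : ι → ℝ} (hs : Injective s)
    (h : IsCoaster ((· < ·) on s) l) : IsPseudoRollercoaster (s ∘ l.reverse.get) :=
  isPseudoRollercoaster_of_straight (hs.comp h.sortedGT.reverse.strictMono_get.injective)
    fun _ _ _ => h.straight_reverse_get

end IsCoaster

theorem rel_or_rel_of_ne {α : Type*} {r : α → α → Prop} [Std.Trichotomous r] {a b : α}
    (h : a ≠ b) : r a b ∨ r b a :=
  (trichotomous_of r a b).imp_right fun h' => h'.resolve_left h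

theorem forall_le_of_covBy {α : Type*} [LinearOrder α] {p : α → Prop} {y z : α} (hyz : y ⋖ z)
    (hp : ∀ i ≤ y, p i) (hz : p z) : ∀ i ≤ z, p i := by
  intro i hi
  rcases hi.lt_or_eq with hi | rfl
  · exact hp i (hyz.le_of_lt hi)
  · exact hz

section Stages

variable {ι : Type*} [Preorder ι] [Bot ι]

/-- The terms up to `y` are covered by two coasters ending in opposite directions. -/
def Opposed (r : ι → ι → Prop) (y : ι) : Prop :=
  ∃ (a b : ι) (A B : List ι), Coaster r (a :: A) ∧ Coaster (swap r) (b :: B) ∧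
    a ≤ y ∧ b ≤ y ∧ ∀ i ≤ y, i ∈ a :: A ∨ i ∈ b :: B

/-- The terms before `x` are covered by two coasters ending in opposite directions, neither of
which can be extended by `x`. -/
def Blocked (r : ι → ι → Prop) (x : ι) : Prop :=
  ∃ (a b : ι) (A B : List ι), Coaster r (a :: A) ∧ Coaster (swap r) (b :: B) ∧
    a < x ∧ b < x ∧ r b x ∧ r x a ∧ ∀ i < x, i ∈ a :: A ∨ i ∈ b :: B

/-- The terms up to `y` are covered by two coasters ending in the direction `r`, where the end `u`
of one comes later than the end `p` of the other, and below it if `r` is the upward direction. -/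
def Parallel (r : ι → ι → Prop) (y : ι) : Prop :=
  ∃ (p u : ι) (P N : List ι), Coaster r (p :: P) ∧ Coaster r (u :: N) ∧
    p < u ∧ r u p ∧ u ≤ y ∧ ∀ i ≤ y, i ∈ p :: P ∨ i ∈ u :: N

/-- The list `u :: N` becomes a coaster once it is continued in the direction `r`; it may be a
coaster with this direction already, or lack the second term of its last run. -/
def Extensible (r : ι → ι → Prop) (u : ι) (N : List ι) : Prop :=
  ∀ z, u < z → r u z → Coaster r (z :: u :: N)

/-- The situation of `Parallel`, but followed by a nonempty list `t :: M` of records, which has been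
appended to both coasters. -/
def Climbing (r : ι → ι → Prop) (y : ι) : Prop :=
  ∃ (p u t : ι) (P N M : List ι), Coaster r (p :: P) ∧ Extensible r u N ∧
    Coaster r (t :: (M ++ p :: P)) ∧ Coaster r (t :: (M ++ u :: N)) ∧
    p < u ∧ r u p ∧ u < t ∧ t ≤ y ∧ ∀ i ≤ y, i ∈ t :: (M ++ p :: P) ∨ i ∈ u :: N

/-- One of the four situations in which the terms up to `y`, or those before `y`, are covered. -/
def Stage (r : ι → ι → Prop) (y : ι) : Prop :=
  Opposed r y ∨ Blocked r y ∨ Parallel r y ∨ Climbing r y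

variable {r : ι → ι → Prop} {y : ι}

theorem Blocked.of_swap (h : Blocked (swap r) y) : Blocked r y := by
  obtain ⟨a, b, A, B, hA, hB, ha, hb, hby, hya, hcov⟩ := h
  exact ⟨b, a, B, A, hB, hA, hb, ha, hya, hby, fun i hi => (hcov i hi).symm⟩

theorem Stage.exists_isCoaster (h : Stage r y) :
    ∃ A B, IsCoaster r A ∧ IsCoaster r B ∧ ∀ i < y, i ∈ A ∨ i ∈ B := by
  rcases h with ⟨a, b, A, B, hA, hB, -, -, hcov⟩ | ⟨a, b, A, B, hA, hB, -, -, -, -, hcov⟩ |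
    ⟨p, u, P, N, hP, hN, -, -, -, hcov⟩ | ⟨p, u, t, P, N, M, -, -, hMP, hMN, -, -, -, -, hcov⟩
  · exact ⟨_, _, Or.inl hA, Or.inr hB, fun i hi => hcov i hi.le⟩
  · exact ⟨_, _, Or.inl hA, Or.inr hB, hcov⟩
  · exact ⟨_, _, Or.inl hP, Or.inl hN, fun i hi => hcov i hi.le⟩
  · exact ⟨_, _, Or.inl hMP, Or.inl hMN, fun i hi => by grind⟩

end Stages

section Steps

variable {ι : Type*} [LinearOrder ι] [Bot ι] {r : ι → ι → Prop} {y z : ι}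

theorem Opposed.step [Std.Trichotomous r] (h : Opposed r y) (hyz : y ⋖ z) :
    Opposed r z ∨ Blocked r z := by
  obtain ⟨a, b, A, B, hA, hB, ha, hb, hcov⟩ := h
  have haz : a < z := ha.trans_lt hyz.lt
  have hbz : b < z := hb.trans_lt hyz.lt
  rcases rel_or_rel_of_ne (r := r) haz.ne with hup | hza
  · refine Or.inl ⟨z, b, a :: A, B, hA.extend haz hup, hB, le_rfl, hbz.le, ?_⟩
    exact forall_le_of_covBy hyz (by grind) (by simp)
  rcases rel_or_rel_of_ne (r := r) hbz.ne with hbz' | hdown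
  · exact Or.inr ⟨a, b, A, B, hA, hB, haz, hbz, hbz', hza, fun i hi => hcov i (hyz.le_of_lt hi)⟩
  · refine Or.inl ⟨a, z, A, b :: B, hA, hB.extend hbz hdown, haz.le, le_rfl, ?_⟩
    exact forall_le_of_covBy hyz (by grind) (by simp)

theorem parallel_or_climbing_of_extensible [Std.Trichotomous r] {p u : ι} {P N : List ι}
    (hP : Coaster r (p :: P)) (hN : Extensible r u N) (hpu : p < u) (hup : r u p) (huz : u < z)
    (hz : r u z) (hyz : y ⋖ z) (hcov : ∀ i ≤ y, i ∈ p :: P ∨ i ∈ u :: N) :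
    Parallel r z ∨ Climbing r z := by
  have hpz : p < z := hpu.trans huz
  have hNz := hN z huz hz
  rcases rel_or_rel_of_ne (r := r) hpz.ne with hrecord | hzp
  · refine Or.inr ⟨p, u, z, P, N, [], hP, hN, hP.extend hpz hrecord, hNz, hpu, hup, huz, le_rfl, ?_⟩
    exact forall_le_of_covBy hyz (by grind) (by simp)
  · refine Or.inl ⟨p, z, P, u :: N, hP, hNz, hpz, hzp, le_rfl, ?_⟩
    exact forall_le_of_covBy hyz (by grind) (by simp)

theorem opposed_of_turn {a p u : ι} {A P : List ι}
    (hA : Coaster r (a :: A)) (hP : Coaster r (p :: P)) (ha : a ≤ y) (hpu : p < u) (hup : r u p)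
    (hu : u ≤ y) (hz : r z u) (hyz : y ⋖ z) (hcov : ∀ i ≤ y, i ∈ a :: A ∨ i ∈ u :: p :: P) :
    Opposed r z := by
  refine ⟨a, z, A, u :: p :: P, hA, hP.turn hpu (hu.trans_lt hyz.lt) hup hz,
    ha.trans hyz.le, le_rfl, ?_⟩
  exact forall_le_of_covBy hyz (by grind) (by simp)

theorem Blocked.step [Std.Trichotomous r] (h : Blocked r y) (hyz : y ⋖ z) (hr : r y z) :
    Parallel r z ∨ Climbing r z := by
  obtain ⟨a, b, A, B, hA, hB, hay, hby, hrby, hrya, hcov⟩ := h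
  refine parallel_or_climbing_of_extensible (N := b :: B) hA
    (fun w hyw hrw => hB.turn hby hyw hrby hrw) hay hrya hyz.lt hr hyz ?_
  grind

theorem Parallel.step [Std.Trichotomous r] (h : Parallel r y) (hyz : y ⋖ z) :
    Opposed r z ∨ Parallel r z ∨ Climbing r z := by
  obtain ⟨p, u, P, N, hP, hN, hpu, hup, hu, hcov⟩ := h
  have huz : u < z := hu.trans_lt hyz.lt
  rcases rel_or_rel_of_ne (r := r) huz.ne with hr | hzu
  · exact Or.inr (parallel_or_climbing_of_extensible hP (fun _ => hN.extend) hpu hup huz hr hyz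
      hcov)
  · exact Or.inl (opposed_of_turn hN hP hu hpu hup hu hzu hyz (by grind))

theorem Climbing.step [Std.Trichotomous r] (h : Climbing r y) (hyz : y ⋖ z) :
    Opposed r z ∨ Parallel r z ∨ Climbing r z := by
  obtain ⟨p, u, t, P, N, M, hP, hN, hMP, hMN, hpu, hup, hut, ht, hcov⟩ := h
  have htz : t < z := ht.trans_lt hyz.lt
  have huz : u < z := hut.trans htz
  rcases rel_or_rel_of_ne (r := r) huz.ne with hr | hzu
  · right
    rcases rel_or_rel_of_ne (r := r) htz.ne with hrecord | hzt
    · refine Or.inr ⟨p, u, z, P, N, t :: M, hP, hN, hMP.extend htz hrecord, hMN.extend htz hrecord,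
        hpu, hup, huz, le_rfl, ?_⟩
      exact forall_le_of_covBy hyz (by grind) (by simp)
    · refine Or.inl ⟨t, z, M ++ p :: P, u :: N, hMP, hN z huz hr, htz, hzt, le_rfl, ?_⟩
      exact forall_le_of_covBy hyz (by grind) (by simp)
  · exact Or.inl (opposed_of_turn hMN hP ht hpu hup (hut.le.trans ht) hzu hyz (by grind))

theorem Stage.step [Std.Trichotomous r] (h : Stage r y) (hyz : y ⋖ z) :
    Stage r z ∨ Stage (swap r) z := by
  rcases h with h | h | h | h
  · exact Or.inl ((h.step hyz).imp_right Or.inl)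
  · rcases rel_or_rel_of_ne (r := r) hyz.ne with hr | hr
    · exact Or.inl (Or.inr (Or.inr (h.step hyz hr)))
    · exact Or.inr (Or.inr (Or.inr (h.of_swap.step hyz hr)))
  · exact Or.inl ((h.step hyz).imp_right Or.inr)
  · exact Or.inl ((h.step hyz).imp_right Or.inr)

end Steps

theorem Opposed.bot {ι : Type*} [PartialOrder ι] [OrderBot ι] (r : ι → ι → Prop) :
    Opposed r (⊥ : ι) :=
  ⟨⊥, ⊥, [], [], .start _, .start _, le_rfl, le_rfl, fun _ hi => by simp [le_bot_iff.1 hi]⟩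

section Succ

variable {ι : Type*} [LinearOrder ι] [OrderBot ι] [SuccOrder ι] [IsSuccArchimedean ι]

theorem stage_or_stage_swap (r : ι → ι → Prop) [Std.Trichotomous r] (y : ι) :
    Stage r y ∨ Stage (swap r) y := by
  induction y using Succ.rec_bot with
  | hbot => exact Or.inl (Or.inl (Opposed.bot r))
  | hsucc y ih =>
    by_cases hy : IsMax y
    · rwa [Order.succ_eq_iff_isMax.2 hy]
    · have hcov := Order.covBy_succ_of_not_isMax hy
      exact ih.elim (fun h => h.step hcov) fun h => (h.step hcov).symm

theorem exists_isCoaster_forall_lt_mem (r : ι → ι → Prop) [Std.Trichotomous r] (y : ι) :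
    ∃ A B, IsCoaster r A ∧ IsCoaster r B ∧ ∀ i < y, i ∈ A ∨ i ∈ B := by
  rcases stage_or_stage_swap r y with h | h
  · exact h.exists_isCoaster
  · obtain ⟨A, B, hA, hB, hcov⟩ := h.exists_isCoaster
    exact ⟨A, B, hA.of_swap, hB.of_swap, hcov⟩

end Succ

theorem card_le_length_add_length {α : Type*} [Fintype α] {l₁ l₂ : List α} {a b : α}
    (h₁ : a ∈ l₁) (h₂ : a ∈ l₂) (hcov : ∀ i ≠ b, i ∈ l₁ ∨ i ∈ l₂) :
    Fintype.card α ≤ l₁.length + l₂.length := by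
  classical
  have huniv : (Finset.univ : Finset α) ⊆ (b :: (l₁ ++ l₂.erase a)).toFinset := by
    intro i _
    simp only [List.mem_toFinset, List.mem_cons, List.mem_append]
    grind
  calc Fintype.card α
      ≤ (b :: (l₁ ++ l₂.erase a)).toFinset.card := Finset.card_le_card huniv
    _ ≤ (b :: (l₁ ++ l₂.erase a)).length := List.toFinset_card_le _
    _ = l₁.length + l₂.length := by
      rw [List.length_cons, List.length_append, add_assoc, List.length_erase_add_one h₂]

/-- Every sequence of `n ≥ 1` distinct real numbers contains two
pseudo-rollercoaster subsequences that both contain the first element, whose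
index sets together cover all indices except possibly the last, and whose
lengths therefore sum to at least `n`. -/
theorem statement10 (n : ℕ) (hn : 1 ≤ n) (s : Fin n → ℝ) (hs : Function.Injective s) :
    ∃ (m₁ m₂ : ℕ) (f₁ : Fin m₁ → Fin n) (f₂ : Fin m₂ → Fin n),
      StrictMono f₁ ∧ StrictMono f₂ ∧
      IsPseudoRollercoaster (s ∘ f₁) ∧ IsPseudoRollercoaster (s ∘ f₂) ∧
      (⟨0, hn⟩ : Fin n) ∈ Set.range f₁ ∧ (⟨0, hn⟩ : Fin n) ∈ Set.range f₂ ∧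
      (∀ i : Fin n, (i : ℕ) ≠ n - 1 → i ∈ Set.range f₁ ∪ Set.range f₂) ∧
      n ≤ m₁ + m₂ := by
  obtain ⟨k, rfl⟩ := Nat.exists_eq_add_of_le' hn
  have := hs.trichotomous_onFun (· < ·)
  obtain ⟨A, B, hA, hB, hcov⟩ := exists_isCoaster_forall_lt_mem ((· < ·) on s) (Fin.last k)
  have hrange (l : List (Fin (k + 1))) (i : Fin (k + 1)) :
      i ∈ Set.range l.reverse.get ↔ i ∈ l := by
    simp only [Set.range_list_get, List.mem_reverse, Set.mem_ofPred_eq]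
  refine ⟨_, _, A.reverse.get, B.reverse.get, hA.sortedGT.reverse.strictMono_get,
    hB.sortedGT.reverse.strictMono_get, hA.isPseudoRollercoaster hs, hB.isPseudoRollercoaster hs,
    (hrange _ _).2 hA.bot_mem, (hrange _ _).2 hB.bot_mem, fun i hi => ?_, ?_⟩
  · rw [Set.mem_union, hrange, hrange]
    exact hcov i (Fin.lt_last_iff_ne_last.2 fun h => hi (by simp [h]))
  · rw [List.length_reverse, List.length_reverse]
    simpa using card_le_length_add_length hA.bot_mem hB.bot_mem
      fun i hi => hcov i (Fin.lt_last_iff_ne_last.2 hi)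
end

section
/- Let r(n) denote the number of permutations of {1, 2, …, n} that are rollercoasters, and let s(n) denote the number of permutations of {1, 2, …, n} whose descent word contains neither 'aba' nor 'bab' as a contiguous factor. Then r(n) = Θ(s(n)); that is, there exist positive constants c₁, c₂ and an N such that c₁ · s(n) ≤ r(n) ≤ c₂ · s(n) for all n ≥ N. -/
/-- The *descent word* of a sequence `t` of distinct reals: letter `i` is
`true` (the letter 'a') if `t i < t (i+1)` and `false` (the letter 'b')
otherwise. -/
noncomputable def descentWord {m : ℕ} (t : Fin m → ℝ) : Fin (m - 1) → Bool :=
  fun i => decide (t ⟨(i : ℕ), by have := i.isLt; omega⟩ <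
    t ⟨(i : ℕ) + 1, by have := i.isLt; omega⟩)

/-- The descent word of `t` contains neither 'aba' nor 'bab' as a contiguous
factor. -/
def DescentWordAvoidsAbaBab {m : ℕ} (t : Fin m → ℝ) : Prop :=
  ∀ i : ℕ, ∀ _h : i + 3 ≤ m - 1,
    ¬(descentWord t ⟨i, by omega⟩ ≠ descentWord t ⟨i + 1, by omega⟩ ∧
      descentWord t ⟨i + 1, by omega⟩ ≠ descentWord t ⟨i + 2, by omega⟩)

/-- `rollercoasterCount n` is the number of permutations of `{1,…,n}` that
are rollercoasters. -/
noncomputable def rollercoasterCount (n : ℕ) : ℕ :=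
  Nat.card {π : Equiv.Perm (Fin n) // IsRollercoaster (fun i => ((π i : ℕ) : ℝ))}

/-- `avoiderCount n` is the number of permutations of `{1,…,n}` whose descent
word contains neither 'aba' nor 'bab' as a contiguous factor. -/
noncomputable def avoiderCount (n : ℕ) : ℕ :=
  Nat.card {π : Equiv.Perm (Fin n) // DescentWordAvoidsAbaBab (fun i => ((π i : ℕ) : ℝ))}

/-!
Among sequences of distinct reals, the rollercoasters are those whose descent word avoids `aba` and
`bab`, starts with `aa` or `bb` and ends with `aa` or `bb`. This gives `r(n) ≤ s(n)`. Conversely,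
the start can be repaired by sorting the first three entries, increasingly if the fifth entry is
below the fourth and decreasingly otherwise. Sorting increasingly turns the word into `aa?b…`. If
`?` is `b`, nothing near the start alternates; if `?` is `a`, then the fourth entry exceeds the
first three, so `?` was `a` before sorting and the factors from there on are unchanged. Repairing
the end in the same way, one permutes at most six positions in total, so every avoider is a
rollercoaster composed with one of at most `6! = 720` permutations of positions, whence
`s(n) ≤ 720 r(n)`.
-/

open Equiv

section Alternation

variable {α : Type*} [LT α] {m : ℕ} {s t : Fin m → α}

/-- `MonotoneTripleAt t i` says that `t i, t (i+1), t (i+2)` is strictly monotone, i.e. that letters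
`i` and `i + 1` of the descent word of `t` agree. It is false when one of the three terms does not
exist. -/
def MonotoneTripleAt (t : Fin m → α) (i : ℕ) : Prop :=
  ∃ h : i + 2 < m,
    t ⟨i, by omega⟩ < t ⟨i + 1, by omega⟩ ∧ t ⟨i + 1, by omega⟩ < t ⟨i + 2, h⟩ ∨
    t ⟨i + 1, by omega⟩ < t ⟨i, by omega⟩ ∧ t ⟨i + 2, h⟩ < t ⟨i + 1, by omega⟩

/-- Among any four consecutive terms of `t`, the first three or the last three are strictly
monotone. For sequences of distinct terms this says that the descent word avoids `aba` and `bab`;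
unlike the descent word, it is visibly invariant under reversing the sequence or the order. -/
def AvoidsAlternating (t : Fin m → α) : Prop :=
  ∀ i, i + 3 < m → MonotoneTripleAt t i ∨ MonotoneTripleAt t (i + 1)

theorem MonotoneTripleAt.congr {i : ℕ} (ht : MonotoneTripleAt t i)
    (hst : ∀ j : Fin m, i ≤ j → (j : ℕ) ≤ i + 2 → s j = t j) : MonotoneTripleAt s i := by
  obtain ⟨h, ht⟩ := ht
  refine ⟨h, ?_⟩
  rwa [hst ⟨i, _⟩ le_rfl (by simp), hst ⟨i + 1, _⟩ (by simp) (by simp),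
    hst ⟨i + 2, _⟩ (by simp) le_rfl]

theorem monotoneTripleAt_toDual_comp_iff {i : ℕ} :
    MonotoneTripleAt (OrderDual.toDual ∘ t) i ↔ MonotoneTripleAt t i :=
  exists_congr fun _ => or_comm

theorem avoidsAlternating_toDual_comp_iff :
    AvoidsAlternating (OrderDual.toDual ∘ t) ↔ AvoidsAlternating t := by
  simp only [AvoidsAlternating, monotoneTripleAt_toDual_comp_iff]

theorem MonotoneTripleAt.comp_rev {i j : ℕ} (ht : MonotoneTripleAt t j) (hij : i + j + 3 = m) :
    MonotoneTripleAt (t ∘ Fin.rev) i := by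
  obtain ⟨h, ht⟩ := ht
  have rev_eq (k : ℕ) (hk : k ≤ 2) :
      Fin.rev (⟨i + k, by omega⟩ : Fin m) = ⟨j + (2 - k), by omega⟩ := by
    ext
    simp only [Fin.val_rev]
    omega
  refine ⟨by omega, ?_⟩
  simp only [Function.comp_apply, rev_eq 1 one_le_two, rev_eq 2 le_rfl]
  rw [show Fin.rev (⟨i, _⟩ : Fin m) = _ from rev_eq 0 zero_le_two]
  exact ht.symm.imp And.symm And.symm

theorem AvoidsAlternating.comp_rev (ht : AvoidsAlternating t) :
    AvoidsAlternating (t ∘ Fin.rev) := fun i hi =>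
  (ht (m - 4 - i) (by omega)).symm.imp (·.comp_rev (by omega)) (·.comp_rev (by omega))

end Alternation

section Runs

variable {m : ℕ}

theorem strictMonoOn_Icc_of_forall_lt_succ {α : Type*} [Preorder α] {t : Fin m → α} {i j : ℕ}
    (hj : j < m) (hi : i < m)
    (ht : ∀ k, i ≤ k → ∀ hk : k + 1 ≤ j, t ⟨k, by omega⟩ < t ⟨k + 1, by omega⟩) :
    StrictMonoOn t (Set.Icc ⟨i, hi⟩ ⟨j, hj⟩) := by
  rintro ⟨a, ha⟩ ⟨hia, -⟩ ⟨b, hb⟩ ⟨-, hbj⟩ hab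
  simp only [Fin.mk_le_mk, Fin.mk_lt_mk] at hia hbj hab
  induction b, hab using Nat.le_induction with
  | base => exact ht a hia hbj
  | succ b hab ih => exact (ih (by omega) (by omega)).trans (ht b (by omega) hbj)

theorem monotoneTripleAt_iff_strictMonoOn_or_strictAntiOn {α : Type*} [Preorder α]
    {t : Fin m → α} {i : ℕ} (hi : i + 2 < m) :
    MonotoneTripleAt t i ↔
      StrictMonoOn t (Set.Icc ⟨i, by omega⟩ ⟨i + 2, hi⟩) ∨
        StrictAntiOn t (Set.Icc ⟨i, by omega⟩ ⟨i + 2, hi⟩) := by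
  have mono_iff {β : Type _} [Preorder β] {s : Fin m → β} :
      StrictMonoOn s (Set.Icc ⟨i, by omega⟩ ⟨i + 2, hi⟩) ↔
        s ⟨i, by omega⟩ < s ⟨i + 1, by omega⟩ ∧ s ⟨i + 1, by omega⟩ < s ⟨i + 2, hi⟩ := by
    refine ⟨fun h => ⟨h ?_ ?_ ?_, h ?_ ?_ ?_⟩, fun h => ?_⟩
    iterate 6 simp
    refine strictMonoOn_Icc_of_forall_lt_succ _ _ fun k hik hk => ?_
    obtain rfl | rfl : k = i ∨ k = i + 1 := by omega
    exacts [h.1, h.2]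
  rw [← strictMonoOn_toDual_comp_iff, mono_iff, mono_iff]
  exact exists_prop_of_true hi

theorem strictMonoOn_or_strictAntiOn_Icc_succ {α : Type*} [LinearOrder α] {t : Fin m → α}
    (ht : Function.Injective t) {i : ℕ} (hi : i + 1 < m) :
    StrictMonoOn t (Set.Icc ⟨i, by omega⟩ ⟨i + 1, hi⟩) ∨
      StrictAntiOn t (Set.Icc ⟨i, by omega⟩ ⟨i + 1, hi⟩) := by
  rw [← strictMonoOn_toDual_comp_iff]
  have hne : t ⟨i, by omega⟩ ≠ t ⟨i + 1, hi⟩ := ht.ne (by simp)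
  refine hne.lt_or_gt.imp (fun h => ?_) (fun h => ?_) <;>
  · refine strictMonoOn_Icc_of_forall_lt_succ _ _ fun k hik hk => ?_
    obtain rfl : k = i := by omega
    exact h

theorem isRun_succ_of_not_monotoneTripleAt {t : Fin m → ℝ} (ht : Function.Injective t) {i : ℕ}
    (hi : i + 1 < m) (h : ∀ k, k ≤ i → i ≤ k + 1 → ¬ MonotoneTripleAt t k) :
    IsRun t ⟨i, by omega⟩ ⟨i + 1, hi⟩ := by
  refine ⟨by simp, strictMonoOn_or_strictAntiOn_Icc_succ ht hi, ?_⟩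
  rintro ⟨a, ha⟩ ⟨b, hb⟩ hai hib hne hmono
  simp only [Fin.mk_le_mk, ne_eq, Fin.mk.injEq] at hai hib hne
  obtain ⟨k, hki, hik, hak, hkb⟩ : ∃ k, k ≤ i ∧ i ≤ k + 1 ∧ a ≤ k ∧ k + 2 ≤ b := by
    obtain h | h : a + 1 ≤ i ∨ i + 2 ≤ b := by omega
    exacts [⟨i - 1, by omega⟩, ⟨i, by omega⟩]
  have hsub : Set.Icc (⟨k, by omega⟩ : Fin m) ⟨k + 2, by omega⟩ ⊆ Set.Icc ⟨a, ha⟩ ⟨b, hb⟩ :=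
    Set.Icc_subset_Icc hak hkb
  exact h k hki hik <| (monotoneTripleAt_iff_strictMonoOn_or_strictAntiOn _).2 <|
    hmono.imp (·.mono hsub) (·.mono hsub)

theorem IsRun.not_monotoneTripleAt {t : Fin m → ℝ} {i j : Fin m} (hrun : IsRun t i j)
    (hij : (j : ℕ) < i + 2) {k : ℕ} (hki : k ≤ i) (hjk : j ≤ k + 2) :
    ¬ MonotoneTripleAt t k := by
  intro htriple
  have hk : k + 2 < m := htriple.1
  refine hrun.2.2 ⟨k, by omega⟩ ⟨k + 2, hk⟩ hki hjk ?_
    ((monotoneTripleAt_iff_strictMonoOn_or_strictAntiOn hk).1 htriple)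
  simp only [ne_eq, Fin.ext_iff]
  omega

theorem isRollercoaster_iff_forall_exists_monotoneTripleAt {t : Fin m → ℝ} :
    IsRollercoaster t ↔ 3 ≤ m ∧ Function.Injective t ∧
      ∀ i, i + 1 < m → ∃ k, k ≤ i ∧ i ≤ k + 1 ∧ MonotoneTripleAt t k := by
  refine and_congr_right fun hm => and_congr_right fun ht =>
    ⟨fun h i hi => ?_, fun h i j hrun => ?_⟩
  · by_contra! hnot
    have hlong : i + 2 ≤ i + 1 := h _ _ (isRun_succ_of_not_monotoneTripleAt ht hi hnot)
    omega
  · by_contra! hij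
    obtain ⟨p, hp, hpi, hip⟩ : ∃ p, p + 1 < m ∧ p ≤ i ∧ (j : ℕ) ≤ p + 1 := by
      by_cases hi : (i : ℕ) + 1 < m
      exacts [⟨i, by omega⟩, ⟨i - 1, by omega⟩]
    obtain ⟨k, hkp, hpk, htriple⟩ := h p hp
    exact hrun.not_monotoneTripleAt hij (by omega) (by omega) htriple

theorem isRollercoaster_iff_avoidsAlternating {t : Fin m → ℝ} :
    IsRollercoaster t ↔ 3 ≤ m ∧ Function.Injective t ∧ AvoidsAlternating t ∧
      MonotoneTripleAt t 0 ∧ MonotoneTripleAt t (m - 3) := by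
  rw [isRollercoaster_iff_forall_exists_monotoneTripleAt]
  refine and_congr_right fun hm => and_congr_right fun _ => ⟨fun h => ⟨fun i hi => ?_, ?_, ?_⟩, ?_⟩
  · obtain ⟨k, hki, hik, hk⟩ := h (i + 1) (by omega)
    obtain rfl | rfl : k = i ∨ k = i + 1 := by omega
    exacts [Or.inl hk, Or.inr hk]
  · obtain ⟨k, hk0, -, hk⟩ := h 0 (by omega)
    rwa [Nat.le_zero.1 hk0] at hk
  · obtain ⟨k, -, hmk, hk⟩ := h (m - 2) (by omega)
    have hkm : k + 2 < m := hk.1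
    rwa [show m - 3 = k by omega]
  · rintro ⟨hav, hstart, hend⟩ i hi
    obtain rfl | hi0 := Nat.eq_zero_or_pos i
    · exact ⟨0, le_rfl, zero_le_one, hstart⟩
    by_cases him : i + 2 < m
    · obtain h | h := hav (i - 1) (by omega)
      · exact ⟨i - 1, by omega, by omega, h⟩
      · exact ⟨i - 1 + 1, by omega, by omega, h⟩
    · exact ⟨m - 3, by omega, by omega, hend⟩

theorem descentWordAvoidsAbaBab_iff_avoidsAlternating {t : Fin m → ℝ}
    (ht : Function.Injective t) : DescentWordAvoidsAbaBab t ↔ AvoidsAlternating t := by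
  have triple_iff (i : ℕ) (hi : i + 2 < m) : MonotoneTripleAt t i ↔
      descentWord t ⟨i, by omega⟩ = descentWord t ⟨i + 1, by omega⟩ := by
    have h₁ : t ⟨i, by omega⟩ ≠ t ⟨i + 1, by omega⟩ := ht.ne (by simp)
    have h₂ : t ⟨i + 1, by omega⟩ ≠ t ⟨i + 2, hi⟩ := ht.ne (by simp)
    rw [MonotoneTripleAt, exists_prop_of_true hi, descentWord, descentWord, decide_eq_decide]
    grind
  refine forall_congr' fun i => ⟨fun h hi => ?_, fun h hi => ?_⟩
  · rw [triple_iff i (by omega), triple_iff (i + 1) hi, or_iff_not_and_not]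
    exact h (by omega)
  · rw [← or_iff_not_and_not, ← triple_iff i (by omega), ← triple_iff (i + 1) (by omega)]
    exact h (by omega)

end Runs

section SortingTheEnds

variable {α : Type*} [LinearOrder α] {m : ℕ} {t : Fin m → α}

theorem exists_perm_strictMonoOn_Iic (ht : Function.Injective t) (a : Fin m) :
    ∃ σ : Perm (Fin m), (∀ i, a < i → σ i = i) ∧ StrictMonoOn (t ∘ σ) (Set.Iic a) := by
  let head : Fin (a + 1) ↪ Fin m := Fin.castLEEmb a.isLt
  let σ := Tuple.sort (t ∘ head)
  have hσ : StrictMono (t ∘ head ∘ σ) :=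
    (Tuple.monotone_sort (t ∘ head)).strictMono_of_injective
      (ht.comp (head.injective.comp σ.injective))
  refine ⟨σ.viaEmbedding head, fun i hi => ?_, fun i hi j hj hij => ?_⟩
  · refine Perm.viaEmbedding_apply_of_notMem _ _ _ ?_
    rintro ⟨j, rfl⟩
    exact (Nat.le_of_lt_succ j.isLt).not_gt hi
  · have hlt := @hσ ⟨i, Nat.lt_succ_of_le hi⟩ ⟨j, Nat.lt_succ_of_le hj⟩ hij
    simp only [Function.comp_apply, ← Perm.viaEmbedding_apply] at hlt
    exact hlt

theorem apply_le_apply_of_strictMonoOn_Iic {α : Type*} [Preorder α] {t : Fin m → α}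
    {σ : Perm (Fin m)} {a : Fin m} (hfix : ∀ i, a < i → σ i = i)
    (hmono : StrictMonoOn (t ∘ σ) (Set.Iic a)) : t a ≤ t (σ a) := by
  have hσ : σ (σ.symm a) = a := σ.apply_symm_apply a
  have hle : σ.symm a ≤ a := by
    by_contra! hlt
    exact hlt.ne' ((hfix _ hlt).symm.trans hσ)
  calc t a = (t ∘ σ) (σ.symm a) := congrArg t hσ.symm
    _ ≤ (t ∘ σ) a := hmono.monotoneOn hle Set.self_mem_Iic hle

theorem AvoidsAlternating.comp_of_strictMonoOn_Iic (hav : AvoidsAlternating t)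
    (ht : Function.Injective t) {σ : Perm (Fin m)} {a : Fin m} (ha : (a : ℕ) + 2 < m)
    (hdesc : t ⟨a + 2, ha⟩ < t ⟨a + 1, by omega⟩)
    (hfix : ∀ i, a < i → σ i = i) (hmono : StrictMonoOn (t ∘ σ) (Set.Iic a)) :
    AvoidsAlternating (t ∘ σ) := by
  intro i hi
  have tail {j : ℕ} (haj : a < j) (hj : MonotoneTripleAt t j) : MonotoneTripleAt (t ∘ σ) j :=
    hj.congr fun l hjl _ => congrArg t (hfix l (haj.trans_le hjl))
  have head {j l : Fin m} (hjl : j < l) (hla : l ≤ a) : (t ∘ σ) j < (t ∘ σ) l :=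
    hmono (hjl.le.trans hla) hla hjl
  have hdesc' : (t ∘ σ) ⟨a + 2, ha⟩ < (t ∘ σ) ⟨a + 1, by omega⟩ := by
    simpa only [Function.comp_apply, hfix ⟨a + 2, ha⟩ (by simp [Fin.lt_def]),
      hfix ⟨a + 1, by omega⟩ (by simp [Fin.lt_def])] using hdesc
  have hne : (t ∘ σ) a ≠ (t ∘ σ) ⟨a + 1, by omega⟩ :=
    (ht.comp σ.injective).ne (by simp [Fin.ext_iff])
  obtain ⟨a, ham⟩ := a
  obtain hia | rfl | rfl | hia : i + 2 ≤ a ∨ i + 1 = a ∨ i = a ∨ a < i := by omega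
  · exact Or.inl ⟨by omega, Or.inl ⟨head (by simp) (by simp; omega), head (by simp) hia⟩⟩
  · exact hne.lt_or_gt.imp (fun h => ⟨by omega, Or.inl ⟨head (by simp) le_rfl, h⟩⟩)
      (fun h => ⟨hi, Or.inr ⟨h, hdesc'⟩⟩)
  · obtain h | h := hne.lt_or_gt
    · have hasc : t ⟨i, ham⟩ < t ⟨i + 1, by omega⟩ :=
        (apply_le_apply_of_strictMonoOn_Iic hfix hmono).trans_lt
          (h.trans_eq (congrArg t (hfix _ (by simp))))
      refine Or.inr (tail (Nat.lt_succ_self i) ((hav i hi).resolve_left ?_))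
      rintro ⟨_, hup | hdown⟩
      exacts [hup.2.asymm hdesc, hdown.1.asymm hasc]
    · exact Or.inl ⟨ha, Or.inr ⟨h, hdesc'⟩⟩
  · exact (hav i hi).imp (tail hia) (tail (by simp; omega))

theorem AvoidsAlternating.exists_perm_monotoneTripleAt_zero_of_lt (hav : AvoidsAlternating t)
    (ht : Function.Injective t) (hm : 5 ≤ m)
    (hdesc : t ⟨4, by omega⟩ < t ⟨3, by omega⟩) :
    ∃ σ : Perm (Fin m), (∀ i : Fin m, 3 ≤ (i : ℕ) → σ i = i) ∧ AvoidsAlternating (t ∘ σ) ∧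
      MonotoneTripleAt (t ∘ σ) 0 := by
  obtain ⟨σ, hfix, hmono⟩ := exists_perm_strictMonoOn_Iic ht ⟨2, by omega⟩
  refine ⟨σ, hfix, hav.comp_of_strictMonoOn_Iic ht (by simp; omega) hdesc hfix hmono, ?_⟩
  rw [monotoneTripleAt_iff_strictMonoOn_or_strictAntiOn (by omega)]
  exact Or.inl (hmono.mono Set.Icc_subset_Iic_self)

theorem AvoidsAlternating.exists_perm_monotoneTripleAt_zero (hav : AvoidsAlternating t)
    (ht : Function.Injective t) (hm : 5 ≤ m) :
    ∃ σ : Perm (Fin m), (∀ i : Fin m, 3 ≤ (i : ℕ) → σ i = i) ∧ AvoidsAlternating (t ∘ σ) ∧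
      MonotoneTripleAt (t ∘ σ) 0 := by
  have hne : t ⟨4, by omega⟩ ≠ t ⟨3, by omega⟩ := ht.ne (by simp)
  obtain hdesc | hasc := hne.lt_or_gt
  · exact hav.exists_perm_monotoneTripleAt_zero_of_lt ht hm hdesc
  · obtain ⟨σ, hfix, havσ, hstart⟩ :=
      (avoidsAlternating_toDual_comp_iff.2 hav).exists_perm_monotoneTripleAt_zero_of_lt
        (OrderDual.toDual.injective.comp ht) hm hasc
    exact ⟨σ, hfix, avoidsAlternating_toDual_comp_iff.1 havσ,
      monotoneTripleAt_toDual_comp_iff.1 hstart⟩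

theorem AvoidsAlternating.exists_perm_monotoneTripleAt_sub_three (hav : AvoidsAlternating t)
    (ht : Function.Injective t) (hm : 5 ≤ m) :
    ∃ σ : Perm (Fin m), (∀ i : Fin m, (i : ℕ) + 3 < m → σ i = i) ∧ AvoidsAlternating (t ∘ σ) ∧
      MonotoneTripleAt (t ∘ σ) (m - 3) := by
  obtain ⟨σ, hfix, havσ, hstart⟩ :=
    hav.comp_rev.exists_perm_monotoneTripleAt_zero (ht.comp Fin.rev_injective) hm
  have hcomp : t ∘ (Fin.revPerm * σ * Fin.revPerm : Perm (Fin m)) =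
      ((t ∘ Fin.rev) ∘ σ) ∘ Fin.rev := rfl
  refine ⟨Fin.revPerm * σ * Fin.revPerm, fun i hi => ?_, hcomp ▸ havσ.comp_rev,
    hcomp ▸ hstart.comp_rev (by omega)⟩
  have hrev : σ i.rev = i.rev := hfix _ (by rw [Fin.val_rev]; omega)
  simp [hrev]

theorem AvoidsAlternating.exists_perm_monotoneTripleAt_ends (hav : AvoidsAlternating t)
    (ht : Function.Injective t) (hm : 6 ≤ m) :
    ∃ σ : Perm (Fin m), (∀ i : Fin m, 3 ≤ (i : ℕ) → (i : ℕ) + 3 < m → σ i = i) ∧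
      AvoidsAlternating (t ∘ σ) ∧ MonotoneTripleAt (t ∘ σ) 0 ∧
        MonotoneTripleAt (t ∘ σ) (m - 3) := by
  obtain ⟨σ, hσ, havσ, hstart⟩ := hav.exists_perm_monotoneTripleAt_zero ht (by omega)
  obtain ⟨τ, hτ, havτ, hend⟩ :=
    havσ.exists_perm_monotoneTripleAt_sub_three (ht.comp σ.injective) (by omega)
  refine ⟨σ * τ, fun i h₃ hm₃ => ?_, havτ, ?_, hend⟩
  · rw [Perm.mul_apply, hτ i hm₃, hσ i h₃]
  · exact hstart.congr fun i _ hi => congrArg (t ∘ σ) (hτ i (by omega))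

end SortingTheEnds

section Counting

/-- The first three and the last three elements of `Fin n`. -/
def endPositions (n : ℕ) : Finset (Fin n) := {i | (i : ℕ) < 3 ∨ n ≤ i + 3}

theorem card_endPositions_le (n : ℕ) : (endPositions n).card ≤ 6 := by
  have hsub : (endPositions n).map Fin.valEmbedding ⊆ Finset.range 3 ∪ Finset.Ico (n - 3) n := by
    intro i
    simp only [endPositions, Finset.mem_map, Finset.mem_filter_univ, Fin.valEmbedding_apply,
      Finset.mem_union, Finset.mem_range, Finset.mem_Ico]
    omega
  calc (endPositions n).card = ((endPositions n).map Fin.valEmbedding).card :=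
        (Finset.card_map _).symm
    _ ≤ (Finset.range 3 ∪ Finset.Ico (n - 3) n).card := Finset.card_le_card hsub
    _ ≤ (Finset.range 3).card + (Finset.Ico (n - 3) n).card := Finset.card_union_le _ _
    _ ≤ 6 := by
      rw [Finset.card_range, Nat.card_Ico]
      omega

theorem card_permsOfFinset_endPositions_le (n : ℕ) : (permsOfFinset (endPositions n)).card ≤ 720 :=
  (card_perms_of_finset _).trans_le (Nat.factorial_le (card_endPositions_le n))

theorem natCard_le_mul_of_forall_exists_mul_mem {G : Type*} [Group G] {A B S : Set G}
    (hB : B.Finite) (hS : S.Finite) (h : ∀ a ∈ A, ∃ s ∈ S, a * s ∈ B) :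
    Nat.card A ≤ Nat.card B * Nat.card S := by
  open scoped Pointwise in
  have hsub : A ⊆ B / S := fun a ha => by
    obtain ⟨s, hs, has⟩ := h a ha
    exact ⟨a * s, has, s, hs, mul_div_cancel_right a s⟩
  exact (Nat.card_mono (hB.div hS) hsub).trans Set.natCard_div_le

theorem injective_natCast_val_perm {n : ℕ} (π : Perm (Fin n)) :
    Function.Injective fun i => ((π i : ℕ) : ℝ) :=
  Nat.cast_injective.comp (Fin.val_injective.comp π.injective)

theorem rollercoasterCount_le_avoiderCount (n : ℕ) : rollercoasterCount n ≤ avoiderCount n :=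
  Nat.card_mono (Set.toFinite _) fun π hπ =>
    (descentWordAvoidsAbaBab_iff_avoidsAlternating (injective_natCast_val_perm π)).2
      (isRollercoaster_iff_avoidsAlternating.1 hπ).2.2.1

theorem avoiderCount_le_mul_rollercoasterCount {n : ℕ} (hn : 6 ≤ n) :
    avoiderCount n ≤ 720 * rollercoasterCount n := by
  let A : Set (Perm (Fin n)) := {π | DescentWordAvoidsAbaBab fun i => ((π i : ℕ) : ℝ)}
  let R : Set (Perm (Fin n)) := {π | IsRollercoaster fun i => ((π i : ℕ) : ℝ)}
  let S : Set (Perm (Fin n)) := permsOfFinset (endPositions n)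
  have repair : ∀ π ∈ A, ∃ σ ∈ S, π * σ ∈ R := by
    intro π hπ
    have hinj := injective_natCast_val_perm π
    obtain ⟨σ, hfix, hav, hstart, hend⟩ :=
      ((descentWordAvoidsAbaBab_iff_avoidsAlternating hinj).1
        hπ).exists_perm_monotoneTripleAt_ends hinj hn
    refine ⟨σ, mem_perms_of_finset_iff.2 fun {i} hi => ?_,
      isRollercoaster_iff_avoidsAlternating.2
        ⟨by omega, hinj.comp σ.injective, hav, hstart, hend⟩⟩
    rw [endPositions, Finset.mem_filter_univ]
    by_contra! hmid
    exact hi (hfix i hmid.1 hmid.2)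
  have hS : Nat.card S ≤ 720 :=
    (Nat.card_eq_card_toFinset S).trans_le (by simpa [S] using card_permsOfFinset_endPositions_le n)
  calc avoiderCount n = Nat.card A := rfl
    _ ≤ Nat.card R * Nat.card S :=
      natCard_le_mul_of_forall_exists_mul_mem (Set.toFinite R) (Set.toFinite S) repair
    _ ≤ Nat.card R * 720 := Nat.mul_le_mul_left _ hS
    _ = 720 * rollercoasterCount n := mul_comm _ _

end Counting

/-- `r(n) = Θ(s(n))`: the number of rollercoaster permutations is within
constant factors of the number of permutations whose descent word avoids
'aba' and 'bab'. -/
theorem statement12 :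
    ∃ c₁ c₂ : ℝ, 0 < c₁ ∧ 0 < c₂ ∧ ∃ N : ℕ, ∀ n : ℕ, N ≤ n →
      c₁ * (avoiderCount n : ℝ) ≤ (rollercoasterCount n : ℝ) ∧
      (rollercoasterCount n : ℝ) ≤ c₂ * (avoiderCount n : ℝ) := by
  refine ⟨1 / 720, 1, by norm_num, one_pos, 6, fun n hn => ⟨?_, ?_⟩⟩
  · have hlower : (avoiderCount n : ℝ) ≤ 720 * rollercoasterCount n := by
      exact_mod_cast avoiderCount_le_mul_rollercoasterCount hn
    linarith
  · rw [one_mul]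
    exact_mod_cast rollercoasterCount_le_avoiderCount n
end
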